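/- For the family C_m of lifted extended quadratic residue codes of length 24 modulo 2^m, let A_{2,2} := 2^{−24}·swe_{C_4}(x_0, x_1, z−y_1, z+y_1−2y_0, z+y_1+2y_0) ∈ ℚ[x_0,x_1,y_0,y_1,z]. Then the sum of those monomials of A_{2,2} that are divisible by x_0·y_0 equals D_{2,2} = 48576·x_0^8·y_0^8·(−x_1^2·y_1^2·z^4 + x_1^4·y_1^2·z^2 + x_1^2·y_1^4·z^2 + x_1^4·y_1^4). -/

import Mathlib

/-!
Over `ℤ/16ℤ` the lifted code is, up to reversing the cyclic coordinates, one explicit free code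
`Code` of rank 12: the two degree-11 factors of `x^23 - 1` modulo 2 have unique Hensel lifts
(`hensel_unique`), which are written down, and their shifts are compared with a systematic
generator matrix (`code_eq`).

The substitution is a partial Fourier transform. A coordinate of value `c = 4 k` contributes
`∑_{b ∈ ℤ/4} i^(b k) y_b`, where `y_b` is `z`, `y_0`, `y_1` or `y_0` for `b = 0, 1, 2, 3`; a
coordinate not divisible by 4 contributes `x_0` or `x_1`, which is put at `b = 0`. Multiplying out,
`swe(…)` is the sum of `T c b` over `c` in the code and all `b ∈ (ℤ/4)^24`. Translating `c` by
`4 d` with `d` in the code multiplies `T c b` by `i^⟨b, d⟩`, so only the vectors `b` orthogonal to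
the code modulo 4 survive (`fourier`), and these are the reductions modulo 4 of codewords, because
that reduction is self-dual (`dual_iff`). A nonzero `T c b` is divisible by `x_0` iff `c` has an odd
coordinate, and by `y_0` iff `b` has one, so the part sought is the sum over pairs in which neither
`c` nor `b` vanishes modulo 2 (`proj_fourier`).

The pairs are grouped by the Golay codeword `c mod 2`. Its contribution `Psi` is invariant under
the cyclic shift `j ↦ j + 1` and the multiplier `j ↦ 2 j`, which are automorphisms of the code
(`Psi_comp`). These have 19 orbits on the nonzero words of the binary Golay code, and on one
representative of each the pairs with `T c b ≠ 0` are enumerated by evaluation in the kernel,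
codewords being stored as four 24-bit integers, one for each binary digit. Representatives of
weight 8 all give `2^24 * 64` times the bracket in the statement (`keys_octad`), the others give
nothing (`keys_other`). There are 759 words of weight 8 and `759 * 64 = 48576`.
-/


open MvPolynomial
open scoped Classical

noncomputable section

/-- The symmetrized weight enumerator of a code `C ⊆ (ℤ/Nℤ)^n` (for `N = p^m`):
the variable `X i` for `i < m` records the number of coordinates of `p`-adic valuation `i`,
and the last variable `X m` (the variable `z`) records the number of zero coordinates. -/
def swe (p m : ℕ) {N n : ℕ} [NeZero N]
    (C : Submodule (ZMod N) (Fin n → ZMod N)) : MvPolynomial (Fin (m + 1)) ℚ :=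
  ∑ c : Fin n → ZMod N, if c ∈ C then
      (∏ i : Fin m, (X (Fin.castSucc i) : MvPolynomial (Fin (m + 1)) ℚ) ^
          (Finset.univ.filter fun j => c j ≠ 0 ∧ padicValNat p (c j).val = (i : ℕ)).card)
        * (X (Fin.last m) : MvPolynomial (Fin (m + 1)) ℚ) ^
            (Finset.univ.filter fun j => c j = 0).card
    else 0

/-- `g` is a monic irreducible degree-11 factor of `x^23 - 1` over `ℤ/pℤ`. -/
def IsQRFactor (p : ℕ) (g : Polynomial (ZMod p)) : Prop :=
  g.Monic ∧ g.natDegree = 11 ∧ Irreducible g ∧ g ∣ (Polynomial.X ^ 23 - 1)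

/-- `gm` is the (Hensel) lift of `g` to `ℤ/Nℤ` and `C` is the associated lifted extended
cyclic quadratic residue code of length 24: the extension by an overall parity check of the
cyclic code of length 23 generated by `gm`. -/
def IsLiftedQR {p N : ℕ} (hpN : p ∣ N) (g : Polynomial (ZMod p)) (gm : Polynomial (ZMod N))
    (C : Submodule (ZMod N) (Fin 24 → ZMod N)) : Prop :=
  gm.Monic ∧ gm.natDegree = 11 ∧ gm ∣ (Polynomial.X ^ 23 - 1) ∧
    gm.map (ZMod.castHom hpN (ZMod p)) = g ∧
    ∀ c : Fin 24 → ZMod N, c ∈ C ↔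
      ((∃ f : Polynomial (ZMod N), ∀ j : Fin 23,
          c (Fin.castSucc j) = ((f * gm) %ₘ (Polynomial.X ^ 23 - 1)).coeff (j : ℕ)) ∧
        c (Fin.last 23) = - ∑ j : Fin 23, c (Fin.castSucc j))

/-- The sum of those monomials of `A` that are divisible by `X i * X j`. -/
def divPart {σ : Type*} (A : MvPolynomial σ ℚ) (i j : σ) : MvPolynomial σ ℚ :=
  ∑ d ∈ A.support.filter (fun d => d i ≠ 0 ∧ d j ≠ 0), monomial d (A.coeff d)

namespace QR24

/-! ### The Hensel lifts of the factors of `x^23 - 1` -/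

section Hensel
open scoped Polynomial

/-- Coprimality lifts from `ℤ/2` to `ℤ/16`, since the kernel of reduction is nilpotent. -/
theorem isCoprime_lift {a b : (ZMod 16)[X]}
    (h : IsCoprime (a.map (ZMod.castHom (by norm_num : 2 ∣ 16) (ZMod 2)))
      (b.map (ZMod.castHom (by norm_num : 2 ∣ 16) (ZMod 2)))) : IsCoprime a b := by
  obtain ⟨u, v, huv⟩ := h
  have hs : Function.Surjective (ZMod.castHom (by norm_num : 2 ∣ 16) (ZMod 2)) :=
    ZMod.castHom_surjective _
  obtain ⟨U, rfl⟩ := Polynomial.map_surjective _ hs u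
  obtain ⟨V, rfl⟩ := Polynomial.map_surjective _ hs v
  have hnil : IsNilpotent (U * a + V * b - 1) := by
    rw [Polynomial.isNilpotent_iff]
    intro i
    have h0 : ((U * a + V * b - 1).map (ZMod.castHom (by norm_num : 2 ∣ 16) (ZMod 2))).coeff i
        = 0 := by
      simp only [Polynomial.map_sub, Polynomial.map_add, Polynomial.map_mul, huv,
        Polynomial.map_one, sub_self, Polynomial.coeff_zero]
    rw [Polynomial.coeff_map] at h0
    have key : ∀ x : ZMod 16, ZMod.castHom (by norm_num : 2 ∣ 16) (ZMod 2) x = 0 → x ^ 4 = 0 := by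
      decide
    exact ⟨4, key _ h0⟩
  have hu : IsUnit (U * a + V * b) := by
    have := hnil.isUnit_one_add
    simpa using this
  obtain ⟨w, hw⟩ := hu.exists_left_inv
  exact ⟨w * U, w * V, by linear_combination hw⟩

/-- Uniqueness of the Hensel lift of a degree-11 factor of `x^23 - 1`: the cofactors are coprime
because `x^23 - 1` is separable modulo 2. -/
theorem hensel_unique {p q : (ZMod 16)[X]} (hp : p.Monic) (hq : q.Monic)
    (hdeg : q.natDegree ≤ p.natDegree) (hpd : p ∣ Polynomial.X ^ 23 - 1)
    (hqd : q ∣ Polynomial.X ^ 23 - 1)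
    (hpq : p.map (ZMod.castHom (by norm_num : 2 ∣ 16) (ZMod 2)) =
      q.map (ZMod.castHom (by norm_num : 2 ∣ 16) (ZMod 2))) : p = q := by
  obtain ⟨k, hk⟩ := hqd
  have hsep : (Polynomial.X ^ 23 - Polynomial.C 1 : (ZMod 2)[X]).Separable :=
    Polynomial.separable_X_pow_sub_C 1 (by decide) one_ne_zero
  have hmap := congrArg (Polynomial.map (ZMod.castHom (by norm_num : 2 ∣ 16) (ZMod 2))) hk
  simp only [Polynomial.map_sub, Polynomial.map_pow, Polynomial.map_X, Polynomial.map_one,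
    Polynomial.map_mul] at hmap
  rw [map_one, hmap] at hsep
  have hc : IsCoprime p k := isCoprime_lift (by rw [hpq]; exact hsep.isCoprime)
  rw [hk] at hpd
  have hd : p ∣ q := hc.dvd_of_dvd_mul_right hpd
  exact (Polynomial.eq_of_monic_of_dvd_of_natDegree_le hp hq hd hdeg).symm

/-- The polynomial over `ℤ/Nℤ` with the given list of coefficients, constant term first. -/
def ofList {N : ℕ} : List (ZMod N) → (ZMod N)[X]
  | [] => 0
  | a :: l => Polynomial.C a + Polynomial.X * ofList l

theorem coeff_ofList {N : ℕ} (l : List (ZMod N)) (n : ℕ) : (ofList l).coeff n = l.getD n 0 := by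
  induction l generalizing n with
  | nil => simp [ofList]
  | cons a l ih =>
    cases n with
    | zero => simp [ofList]
    | succ n => simp [ofList, ih]

theorem natDegree_ofList_le {N : ℕ} (l : List (ZMod N)) (n : ℕ) (h : l.length ≤ n + 1) :
    (ofList l).natDegree ≤ n := by
  rw [Polynomial.natDegree_le_iff_coeff_eq_zero]
  intro m hm
  rw [coeff_ofList]
  simp only [List.getD_eq_getElem?_getD]
  rw [List.getElem?_eq_none (by omega)]; rfl

/-- The coefficients of the two degree-11 Hensel lifts dividing `x^23 - 1` modulo 16. -/
def coefs (e : Bool) : List (ZMod 16) :=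
  if e then [15, 6, 9, 4, 13, 5, 1, 6, 12, 4, 7, 1] else [15, 9, 12, 4, 10, 15, 11, 3, 12, 7, 10, 1]

/-- The coefficients of the two degree-11 irreducible factors of `x^23 - 1` modulo 2. -/
def coefs2 (e : Bool) : List (ZMod 2) :=
  if e then [1, 0, 1, 0, 1, 1, 1, 0, 0, 0, 1, 1] else [1, 1, 0, 0, 0, 1, 1, 1, 0, 1, 0, 1]

theorem monic_ofList {N : ℕ} (l : List (ZMod N)) (hl : l.length = 12)
    (h1 : l.getD 11 0 = 1) : (ofList l).Monic :=
  Polynomial.monic_of_natDegree_le_of_coeff_eq_one 11 (natDegree_ofList_le _ _ (by omega))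
    (by rw [coeff_ofList, h1])

theorem factor_mod16 : (Polynomial.X - 1) * ofList (coefs true) * ofList (coefs false) =
    (Polynomial.X ^ 23 - 1 : (ZMod 16)[X]) := by
  have h16 : (16 : (ZMod 16)[X]) = 0 := by
    exact (map_ofNat Polynomial.C 16).symm.trans
      (by rw [show (OfNat.ofNat 16 : ZMod 16) = 0 by decide, map_zero])
  simp only [coefs, ofList, if_true, Bool.false_eq_true, if_false, map_one, mul_zero, add_zero,
    map_ofNat]
  -- the quotient of the difference of the two sides by the modulus
  linear_combination ((-14) * Polynomial.X ^ 0 + (-9) * Polynomial.X ^ 2 +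
    (6) * Polynomial.X ^ 3 + (-15) * Polynomial.X ^ 4 + (-3) * Polynomial.X ^ 5 +
    (-1) * Polynomial.X ^ 6 + (5) * Polynomial.X ^ 7 + (-16) * Polynomial.X ^ 8 +
    (1) * Polynomial.X ^ 9 + (-7) * Polynomial.X ^ 10 + (20) * Polynomial.X ^ 11 +
    (-6) * Polynomial.X ^ 12 + (6) * Polynomial.X ^ 13 + (4) * Polynomial.X ^ 14 +
    (8) * Polynomial.X ^ 15 + (2) * Polynomial.X ^ 16 + (5) * Polynomial.X ^ 17 +
    (-1) * Polynomial.X ^ 18 + (8) * Polynomial.X ^ 19 + (2) * Polynomial.X ^ 20 +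
    (4) * Polynomial.X ^ 21 + (1) * Polynomial.X ^ 22) * h16

theorem factor_mod2 : (Polynomial.X - 1) * ofList (coefs2 true) * ofList (coefs2 false) =
    (Polynomial.X ^ 23 - 1 : (ZMod 2)[X]) := by
  have h2 : (2 : (ZMod 2)[X]) = 0 := by
    exact (map_ofNat Polynomial.C 2).symm.trans
      (by rw [show (OfNat.ofNat 2 : ZMod 2) = 0 by decide, map_zero])
  simp only [coefs2, ofList, if_true, Bool.false_eq_true, if_false, map_one, map_zero, mul_zero,
    add_zero, zero_add]
  -- the quotient of the difference of the two sides by the modulus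
  linear_combination ((-1) * Polynomial.X ^ 5 + (1) * Polynomial.X ^ 8 + (-1) * Polynomial.X ^ 9 +
    (-2) * Polynomial.X ^ 11 + (2) * Polynomial.X ^ 12 + (1) * Polynomial.X ^ 14 +
    (-1) * Polynomial.X ^ 15 + (1) * Polynomial.X ^ 18) * h2

theorem natDegree_ofList {N : ℕ} [Fact (1 < N)] (l : List (ZMod N)) (hl : l.length = 12)
    (h1 : l.getD 11 0 = 1) : (ofList l).natDegree = 11 := by
  apply le_antisymm (natDegree_ofList_le _ _ (by omega))
  apply Polynomial.le_natDegree_of_ne_zero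
  rw [coeff_ofList, h1]
  exact one_ne_zero

theorem coefs_length (e : Bool) : (coefs e).length = 12 := by cases e <;> rfl
theorem coefs_lead (e : Bool) : (coefs e).getD 11 0 = 1 := by cases e <;> rfl

theorem map_coefs (e : Bool) :
    (ofList (coefs e)).map (ZMod.castHom (by norm_num : 2 ∣ 16) (ZMod 2)) = ofList (coefs2 e) := by
  have key : ∀ e, (coefs e).map (ZMod.castHom (by norm_num : 2 ∣ 16) (ZMod 2)) = coefs2 e := by
    decide
  rw [← key e]
  generalize coefs e = l
  induction l with
  | nil => simp [ofList]
  | cons a l ih =>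
    simp only [ofList, List.map_cons, Polynomial.map_add, Polynomial.map_mul, Polynomial.map_C,
      Polynomial.map_X, ih]

instance : Fact (1 < 16) := ⟨by norm_num⟩

/-- The generator polynomial is one of the two explicit Hensel lifts. -/
theorem generator_eq {g : (ZMod 2)[X]} (hg : IsQRFactor 2 g) {g4 : (ZMod 16)[X]}
    (h1 : g4.Monic) (h2 : g4.natDegree = 11) (h3 : g4 ∣ Polynomial.X ^ 23 - 1)
    (h4 : g4.map (ZMod.castHom (by norm_num : 2 ∣ 16) (ZMod 2)) = g) :
    ∃ e, g4 = ofList (coefs e) := by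
  obtain ⟨hm, hd, hirr, hdvd⟩ := hg
  have : Fact (Nat.Prime 2) := ⟨Nat.prime_two⟩
  have hcase : ∃ e, g = ofList (coefs2 e) := by
    rw [← factor_mod2] at hdvd
    have hfac : ∀ e, g ∣ ofList (coefs2 e) → ∃ e, g = ofList (coefs2 e) := by
      intro e he
      refine ⟨e, (Polynomial.eq_of_monic_of_dvd_of_natDegree_le hm ?_ he ?_).symm⟩
      · apply monic_ofList <;> cases e <;> rfl
      · rw [hd]
        apply natDegree_ofList_le
        cases e <;> simp [coefs2]
    rcases hirr.prime.dvd_or_dvd hdvd with h | h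
    · rcases hirr.prime.dvd_or_dvd h with h | h
      · exfalso
        have hX : (Polynomial.X - 1 : (ZMod 2)[X]) = Polynomial.X - Polynomial.C 1 := by simp
        rw [hX] at h
        have := Polynomial.natDegree_le_of_dvd h (Polynomial.X_sub_C_ne_zero 1)
        rw [hd, Polynomial.natDegree_X_sub_C] at this
        omega
      · exact hfac _ h
    · exact hfac _ h
  obtain ⟨e, he⟩ := hcase
  refine ⟨e, hensel_unique h1 (monic_ofList _ (coefs_length e) (coefs_lead e)) ?_ h3 ?_ ?_⟩
  · rw [h2, natDegree_ofList _ (coefs_length e) (coefs_lead e)]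
  · rw [← factor_mod16]
    cases e
    · exact Dvd.intro_left _ rfl
    · exact Dvd.dvd.mul_right (Dvd.intro_left _ rfl) _
  · rw [h4, he, map_coefs]

end Hensel

/-! ### Data and procedures evaluated in the kernel -/

/-- A vector of `(ℤ/16)^24` stored by its binary digits: bit `j` of `p_i` is the digit of `2^i` in
coordinate `j`. The vector itself is `W.vec`. -/
structure W where
  p0 : ℕ
  p1 : ℕ
  p2 : ℕ
  p3 : ℕ

/-- Addition of vectors over `ℤ/16`, as a ripple-carry adder acting on all coordinates at once. It
is written with the raw `Nat` operations, which the kernel evaluates natively. -/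
def W.add (a b : W) : W :=
  let k0 := Nat.land a.p0 b.p0
  let k1 := Nat.lor (Nat.land a.p1 b.p1) (Nat.land k0 (Nat.xor a.p1 b.p1))
  let k2 := Nat.lor (Nat.land a.p2 b.p2) (Nat.land k1 (Nat.xor a.p2 b.p2))
  ⟨Nat.xor a.p0 b.p0, Nat.xor (Nat.xor a.p1 b.p1) k0, Nat.xor (Nat.xor a.p2 b.p2) k1,
    Nat.xor (Nat.xor a.p3 b.p3) k2⟩

/-- Multiplication by 2 over `ℤ/16`: a shift of the digits. -/
def W.dbl (a : W) : W := ⟨0, a.p0, a.p1, a.p2⟩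

/-- Binary trees of vectors. They keep the recursion depth small when the 4096 words of a code are
traversed in the kernel. -/
inductive Tr
  | leaf (w : W)
  | node (l r : Tr)

/-- Apply a function to every leaf. -/
def Tr.map (f : W → W) : Tr → Tr
  | .leaf w => .leaf (f w)
  | .node l r => .node (l.map f) (r.map f)

/-- The leaves, from left to right. -/
def Tr.toList : Tr → List W
  | .leaf w => [w]
  | .node l r => l.toList ++ r.toList

/-- Whether all leaves satisfy `p`. The recursor is used directly so that the kernel computes with
it cheaply. -/
def Tr.all (p : W → Bool) (t : Tr) : Bool :=
  Tr.rec p (fun _ _ x y => Bool.rec false y x) t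

/-- The concatenation of the lists `f w` over the leaves `w`; see `Tr.fm_eq`. -/
def Tr.fm {β : Type} (f : W → List β) (t : Tr) : List β :=
  Tr.rec f (fun _ _ x y => List.rec y (fun a _ z => a :: z) x) t

/-- All the sums of subsets of a list of vectors. -/
def subs : List W → Tr
  | [] => .leaf ⟨0, 0, 0, 0⟩
  | r :: rs => .node (subs rs) ((subs rs).map (W.add r))

/-- A generator matrix of the code: row `i` has a 1 at position `22 - i`, and 0 at the other
positions from 11 to 22. -/
def rows : List W := [⟨12584506, 8389755, 1446, 1909⟩, ⟨10486557, 1031, 8389290, 1036⟩,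
  ⟨1050548, 1650, 8389314, 8389133⟩, ⟨525274, 825, 8388961, 1852⟩, ⟨262637, 8390566, 1235, 58⟩,
  ⟨8521420, 8389024, 1501, 685⟩, ⟨8455014, 8388816, 8389844, 8390407⟩,
  ⟨8421811, 8388712, 8389226, 1465⟩, ⟨18147, 621, 8389368, 8390009⟩,
  ⟨8398155, 8390525, 722, 8389804⟩, ⟨5279, 8390117, 207, 120⟩, ⟨8391797, 1155, 8390587, 8388885⟩]

/-- The 4096 combinations of the rows with coefficients 0 and 1, hence exactly one lift to `ℤ/16`
of each word of the binary Golay code. -/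
def words : Tr := subs rows

/-- The number of ones among the lowest `f` binary digits. -/
def pcf : ℕ → ℕ → ℕ
  | 0, _ => 0
  | f + 1, n => Nat.add (Nat.mod n 2) (pcf f (Nat.div n 2))

/-- The number of ones among the lowest 24 binary digits: the weight of a binary word of length
24. -/
def pc (n : ℕ) : ℕ := pcf 24 n

/-- Whether two bit masks have disjoint supports. -/
def disj (m n : ℕ) : Bool := Nat.beq (Nat.land m n) 0

/-- The monomial `T A.vec (bvec B)`, in case it is nonzero, packed into a number: the exponent of
`i` modulo 4, then the exponents of `x_0`, `x_1`, `y_0` and `y_1` in base 32. The exponent of `z`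
is what is missing from 24. The unpacking is `F`. -/
def key (A B : W) : ℕ :=
  let k := (pc (Nat.land A.p2 B.p0) + 2 * (pc (Nat.land A.p3 B.p0) + pc (Nat.land A.p2 B.p1))) % 4
  let a0 := pc A.p0
  let a1 := pc (Nat.xor A.p1 (Nat.land A.p1 A.p0))
  let b0 := pc B.p0
  let b1 := pc (Nat.xor B.p1 (Nat.land B.p1 B.p0))
  k + 4 * (a0 + 32 * (a1 + 32 * (b0 + 32 * b1)))

/-- The vectors `a + 2 s`, for `s` among the leaves of `L`, whose digit `p1` is supported off `v`.
-/
def lifts (L : Tr) (a : W) (v : ℕ) : List W :=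
  L.fm fun s => Bool.rec [] [a.add s.dbl] (disj (Nat.xor a.p1 s.p0) v)

/-- The keys of the pairs `(A, B)` whose digits `p1` have disjoint supports. -/
def pairs (As Bs : List W) : List ℕ :=
  As.flatMap fun A => Bs.flatMap fun B => Bool.rec [] [key A B] (disj A.p1 B.p1)

/-- The keys of all nonzero terms `T c b` with `c = a + 2 s`, where `a` reduces to the binary word
`n`, and with `b` the reduction modulo 4 of `v + 2 u`, where `v` is nonzero modulo 2. Here `a`,
`s`, `v` and `u` run through the leaves of `L`; the disjointness conditions amount to `T c b ≠ 0`.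
-/
def keys (L : Tr) (n : ℕ) : List ℕ :=
  L.fm fun a => Bool.rec []
    (L.fm fun v => Bool.rec []
      (Bool.rec (pairs (lifts L a v.p0) (lifts L v a.p0)) [] (Nat.beq v.p0 0))
      (disj a.p0 v.p0))
    (Nat.beq a.p0 n)

/-- Whether `l` has, as a multiset, exactly the entries and multiplicities of the given table. -/
def hist : List (ℕ × ℕ) → List ℕ → Bool
  | [], l => l.isEmpty
  | (k, n) :: t, l => Nat.beq (l.count k) n && hist t (l.filter fun x => !(Nat.beq x k))

/-- The number whose binary digit `j` is the digit of `n` at position `l[j]`. -/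
def permN : List ℕ → ℕ → ℕ
  | [], _ => 0
  | s :: l, n => Nat.add (Nat.mul 2 (permN l n)) (Nat.mod (Nat.shiftRight n s) 2)

/-- The multiplier `j ↦ 2 j` modulo 23, fixing the position 23; it is `dblp` as a list. -/
def mu : List ℕ := [0,2,4,6,8,10,12,14,16,18,20,22,1,3,5,7,9,11,13,15,17,19,21,23]

/-- Rotation of the lowest 23 binary digits, fixing digit 23; it is composition with `sigma`. -/
def rot (n : ℕ) : ℕ :=
  Nat.lor (Nat.lor (Nat.shiftRight (Nat.mod n 8388608) 1) (Nat.shiftLeft (Nat.mod n 2) 22))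
    (Nat.shiftLeft (Nat.shiftRight n 23) 23)

/-- Whether one of the first `f` rotations of `m` is nonzero and smaller than `n`. -/
def srch1 : ℕ → ℕ → ℕ → Bool
  | 0, _, _ => false
  | f + 1, m, n => (Nat.ble 1 m && Nat.ble (Nat.succ m) n) || srch1 f (rot m) n

/-- Whether some rotation of one of the first `f` images of `m` under powers of the multiplier is
nonzero and smaller than `n`. -/
def srch : ℕ → ℕ → ℕ → Bool
  | 0, _, _ => false
  | f + 1, m, n => srch1 23 m n || srch f (permN mu m) n

/-- The smallest elements of the orbits of Golay words of weight 8 under rotations and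
multipliers. -/
def reps8 : List ℕ := [5279, 15777, 8391797]

/-- The smallest elements of the orbits of nonzero Golay words of weight other than 8. -/
def repsN : List ℕ := [28637, 89455, 109547, 129431, 223863, 340831, 515069, 8419127, 8452849,
  8460281, 8470215, 8566443, 8640101, 8650587, 8699391, 16777215]

/-- Boolean list membership, by a test which the kernel evaluates natively. -/
def elem (n : ℕ) (l : List ℕ) : Bool := l.any (Nat.beq n)

/-! ### Bit-sliced vectors -/

/-- The element of `ℤ/16` with the given binary digits, least significant first. -/
def num (a b c d : Bool) : ZMod 16 :=
  cond a 1 0 + cond b 2 0 + cond c 4 0 + cond d 8 0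

/-- The vector over `ℤ/16` stored in `w`. -/
def W.vec (w : W) (j : Fin 24) : ZMod 16 :=
  num (w.p0.testBit j) (w.p1.testBit j) (w.p2.testBit j) (w.p3.testBit j)

theorem vec_add (a b : W) : (a.add b).vec = a.vec + b.vec := by
  funext j
  have key : ∀ a0 a1 a2 a3 b0 b1 b2 b3 : Bool,
      num (a0 ^^ b0) ((a1 ^^ b1) ^^ (a0 && b0))
        ((a2 ^^ b2) ^^ ((a1 && b1) || ((a0 && b0) && (a1 ^^ b1))))
        ((a3 ^^ b3) ^^ ((a2 && b2) || (((a1 && b1) || ((a0 && b0) && (a1 ^^ b1))) && (a2 ^^ b2))))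
      = num a0 a1 a2 a3 + num b0 b1 b2 b3 := by decide
  simp only [W.vec, W.add, Pi.add_apply]
  rw [← key]
  change num (Nat.testBit (a.p0 ^^^ b.p0) j) (Nat.testBit ((a.p1 ^^^ b.p1) ^^^ (a.p0 &&& b.p0)) j)
    (Nat.testBit ((a.p2 ^^^ b.p2) ^^^ ((a.p1 &&& b.p1) ||| ((a.p0 &&& b.p0) &&& (a.p1 ^^^ b.p1)))) j)
    (Nat.testBit ((a.p3 ^^^ b.p3) ^^^ ((a.p2 &&& b.p2) |||
      (((a.p1 &&& b.p1) ||| ((a.p0 &&& b.p0) &&& (a.p1 ^^^ b.p1))) &&& (a.p2 ^^^ b.p2)))) j) = _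
  simp only [Nat.testBit_xor, Nat.testBit_and, Nat.testBit_or]

theorem vec_dbl (a : W) : a.dbl.vec = 2 • a.vec := by
  funext j
  have key : ∀ a0 a1 a2 a3 : Bool, num false a0 a1 a2 = 2 • num a0 a1 a2 a3 := by decide
  simp only [W.vec, W.dbl, Pi.smul_apply, Nat.zero_testBit]
  exact key _ _ _ _

theorem vec_zero : W.vec ⟨0, 0, 0, 0⟩ = 0 := by
  funext j
  simp [W.vec, num]

/-- The reduction of a vector modulo 2, as a binary word. -/
def par {N : ℕ} (c : Fin 24 → ZMod N) (j : Fin 24) : Bool := (c j).val.testBit 0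

/-- The binary word of length 24 given by the digits of `n`. -/
def bits (n : ℕ) (j : Fin 24) : Bool := n.testBit j

theorem par_vec (a : W) : par a.vec = bits a.p0 := by
  funext j
  have key : ∀ a0 a1 a2 a3 : Bool, (num a0 a1 a2 a3).val.testBit 0 = a0 := by decide
  exact key _ _ _ _

theorem bits_inj {m n : ℕ} (hm : m < 2 ^ 24) (hn : n < 2 ^ 24) (h : bits m = bits n) : m = n := by
  apply Nat.eq_of_testBit_eq
  intro i
  by_cases hi : i < 24
  · exact congrFun h ⟨i, hi⟩
  · rw [Nat.testBit_lt_two_pow (lt_of_lt_of_le hm (Nat.pow_le_pow_right (by norm_num) (by omega))),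
      Nat.testBit_lt_two_pow (lt_of_lt_of_le hn (Nat.pow_le_pow_right (by norm_num) (by omega)))]

theorem pcf_eq (k n : ℕ) : pcf k n = ∑ j ∈ Finset.range k, (n.testBit j).toNat := by
  induction k generalizing n with
  | zero => simp [pcf]
  | succ k ih =>
    rw [Finset.sum_range_succ']
    simp only [pcf]
    change n % 2 + pcf k (n / 2) = _
    rw [ih, add_comm]
    congr 1
    · simp only [Nat.testBit_succ]
    · rw [Nat.testBit_zero]
      rcases Nat.mod_two_eq_zero_or_one n with h | h <;> simp [h]

theorem pc_eq (n : ℕ) : pc n = ∑ j : Fin 24, (bits n j).toNat := by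
  rw [pc, pcf_eq, Finset.sum_range]; rfl

theorem disj_iff (m n : ℕ) : disj m n = true ↔ m &&& n = 0 := by
  rw [disj, Nat.beq_eq]; rfl

theorem Tr.all_node (p : W → Bool) (l r : Tr) : (Tr.node l r).all p = (l.all p && r.all p) := by
  change (Bool.rec false (r.all p) (l.all p) : Bool) = _
  cases l.all p <;> rfl

theorem Tr.all_mem {p : W → Bool} {t : Tr} (h : t.all p = true) : ∀ w ∈ t.toList, p w = true := by
  induction t with
  | leaf w => intro x hx; simp only [Tr.toList, List.mem_singleton] at hx; subst hx; exact h
  | node l r hl hr =>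
    rw [Tr.all_node, Bool.and_eq_true] at h
    intro x hx
    simp only [Tr.toList, List.mem_append] at hx
    exact hx.elim (hl h.1 x) (hr h.2 x)

theorem listRec_append {β : Type} (x y : List β) :
    (List.rec y (fun a _ z => a :: z) x : List β) = x ++ y := by
  induction x with
  | nil => rfl
  | cons a x ih => exact congrArg (a :: ·) ih

theorem Tr.fm_eq {β : Type} (f : W → List β) (t : Tr) : t.fm f = t.toList.flatMap f := by
  induction t with
  | leaf w => simp [Tr.toList]; rfl
  | node l r hl hr =>
    rw [Tr.toList, List.flatMap_append, ← hl, ← hr, ← listRec_append]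
    rfl

theorem Tr.toList_map (f : W → W) (t : Tr) : (t.map f).toList = t.toList.map f := by
  induction t with
  | leaf w => rfl
  | node l r hl hr => simp [Tr.map, Tr.toList, hl, hr]

/-! ### The explicit code and its automorphisms -/

/-- The `i`-th generator row. -/
def row (i : Fin 12) : Fin 24 → ZMod 16 := (rows.get i).vec

/-- The information position of row `i`. -/
def info (i : Fin 12) : Fin 24 := ⟨22 - i, by omega⟩

/-- The systematic encoder `t ↦ ∑ t_i row_i`. -/
def enc : (Fin 12 → ZMod 16) →ₗ[ZMod 16] (Fin 24 → ZMod 16) :=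
  Fintype.linearCombination (ZMod 16) row

/-- The explicit lifted extended quadratic residue code over `ℤ/16`. -/
def Code : Submodule (ZMod 16) (Fin 24 → ZMod 16) := LinearMap.range enc

theorem enc_apply (t : Fin 12 → ZMod 16) (j : Fin 24) : enc t j = ∑ i, t i * row i j := by
  simp [enc, Fintype.linearCombination_apply, Finset.sum_apply]

/-- The generator matrix is systematic. -/
theorem row_info : ∀ i k, row i (info k) = if i = k then 1 else 0 := by decide +kernel

theorem enc_info (t : Fin 12 → ZMod 16) (k : Fin 12) : enc t (info k) = t k := by
  simp [enc_apply, row_info]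

theorem enc_injective : Function.Injective enc := fun s t h => by
  funext k; rw [← enc_info s, ← enc_info t, h]

theorem mem_Code_iff (c : Fin 24 → ZMod 16) : c ∈ Code ↔ c = enc (fun i => c (info i)) := by
  constructor
  · rintro ⟨t, rfl⟩
    congr 1
    funext k
    exact (enc_info t k).symm
  · intro h; exact ⟨_, h.symm⟩

theorem row_mem (i : Fin 12) : row i ∈ Code :=
  ⟨Pi.single i 1, by funext j; simp [enc_apply, Pi.single_apply]⟩

theorem Code_le {D : Submodule (ZMod 16) (Fin 24 → ZMod 16)} (h : ∀ i, row i ∈ D) : Code ≤ D := by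
  rintro _ ⟨t, rfl⟩
  have : enc t = ∑ i, t i • row i := by funext j; simp [enc_apply, Finset.sum_apply]
  rw [this]
  exact D.sum_mem fun i _ => D.smul_mem _ (h i)

/-- A code which contains the generator rows, and in which a word vanishing at all information
positions is zero, equals `Code`. -/
theorem eq_Code {D : Submodule (ZMod 16) (Fin 24 → ZMod 16)} (h : ∀ i, row i ∈ D)
    (hz : ∀ c ∈ D, (∀ i, c (info i) = 0) → c = 0) : D = Code := by
  apply le_antisymm _ (Code_le h)
  intro c hc
  rw [mem_Code_iff, ← sub_eq_zero]
  apply hz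
  · exact D.sub_mem hc (Code_le h ⟨_, rfl⟩)
  · intro i; simp [enc_info]

theorem sum_Code {M : Type*} [AddCommMonoid M] (f : (Fin 24 → ZMod 16) → M) :
    (∑ c, if c ∈ Code then f c else 0) = ∑ t, f (enc t) := by
  rw [← Finset.sum_filter]
  have : (Finset.univ.filter fun c => c ∈ Code) = Finset.univ.image enc := by
    ext c
    simp [Code]
  rw [this, Finset.sum_image fun _ _ _ _ h => enc_injective h]

/-- The permutation listed by `l`, with the second list giving the inverse. -/
def permEquiv (l : List (Fin 24)) (l' : List (Fin 24))
    (h1 : ∀ j : Fin 24, l'.getD (l.getD j 0) 0 = j) (h2 : ∀ j : Fin 24, l.getD (l'.getD j 0) 0 = j) :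
    Equiv.Perm (Fin 24) := ⟨fun j => l.getD j 0, fun j => l'.getD j 0, h1, h2⟩

/-- The cyclic shift `j ↦ j + 1` modulo 23, fixing the position 23. -/
def sigma : Equiv.Perm (Fin 24) := permEquiv
  [1,2,3,4,5,6,7,8,9,10,11,12,13,14,15,16,17,18,19,20,21,22,0,23]
  [22,0,1,2,3,4,5,6,7,8,9,10,11,12,13,14,15,16,17,18,19,20,21,23] (by decide) (by decide)

/-- The multiplier `j ↦ 2 j` modulo 23, fixing the position 23. -/
def dblp : Equiv.Perm (Fin 24) := permEquiv
  [0,2,4,6,8,10,12,14,16,18,20,22,1,3,5,7,9,11,13,15,17,19,21,23]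
  [0,12,1,13,2,14,3,15,4,16,5,17,6,18,7,19,8,20,9,21,10,22,11,23] (by decide) (by decide)

/-- The reversal `j ↦ 22 - j` of the cyclic positions, fixing the position 23. It exchanges the
codes of the two factors of `x^23 - 1`. -/
def rev : Equiv.Perm (Fin 24) := permEquiv
  [22,21,20,19,18,17,16,15,14,13,12,11,10,9,8,7,6,5,4,3,2,1,0,23]
  [22,21,20,19,18,17,16,15,14,13,12,11,10,9,8,7,6,5,4,3,2,1,0,23] (by decide) (by decide)

/-- The permutation `π` of the coordinates preserves the code. -/
def IsAut (π : Equiv.Perm (Fin 24)) : Prop := ∀ c : Fin 24 → ZMod 16, c ∘ π ∈ Code ↔ c ∈ Code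

/-- The hypothesis says that each permuted row is encoded by its own entries at the information
positions. -/
theorem comp_mem {π : Equiv.Perm (Fin 24)}
    (h : ∀ i j, row i (π j) = ∑ k, row i (π (info k)) * row k j)
    {c : Fin 24 → ZMod 16} (hc : c ∈ Code) : c ∘ π ∈ Code := by
  have : Code ≤ Code.comap (LinearMap.funLeft (ZMod 16) (ZMod 16) π) := by
    apply Code_le
    intro i
    rw [Submodule.mem_comap, mem_Code_iff]
    funext j
    rw [enc_apply]
    exact h i j
  exact this hc

theorem isAut_of {π : Equiv.Perm (Fin 24)}
    (h : ∀ i j, row i (π j) = ∑ k, row i (π (info k)) * row k j)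
    (h' : ∀ i j, row i (π.symm j) = ∑ k, row i (π.symm (info k)) * row k j) : IsAut π := by
  intro c
  refine ⟨fun hc => ?_, comp_mem h⟩
  have := comp_mem h' hc
  rwa [Function.comp_assoc, Equiv.self_comp_symm, Function.comp_id] at this

theorem sigma_aut : IsAut sigma := isAut_of (by decide +kernel) (by decide +kernel)
theorem dblp_aut : IsAut dblp := isAut_of (by decide +kernel) (by decide +kernel)

/-! ### Self-duality modulo 4 -/

/-- Reduction from `ℤ/16` to `ℤ/4`. -/
def rho : ZMod 16 →+* ZMod 4 := ZMod.castHom (by norm_num) (ZMod 4)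

/-- The generator rows modulo 4. -/
def row4 (i : Fin 12) (j : Fin 24) : ZMod 4 := rho (row i j)

/-- `b` is orthogonal to the reduction of the code modulo 4. -/
def Dual (b : Fin 24 → ZMod 4) : Prop := ∀ c ∈ Code, ∑ j, b j * rho (c j) = 0

/-- The encoder of the code modulo 4. -/
def enc4 (t : Fin 12 → ZMod 4) (j : Fin 24) : ZMod 4 := ∑ i, t i * row4 i j

theorem row4_info (i k) : row4 i (info k) = if i = k then 1 else 0 := by
  rw [row4, row_info]; split_ifs <;> simp

theorem enc4_info (t : Fin 12 → ZMod 4) (k : Fin 12) : enc4 t (info k) = t k := by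
  simp [enc4, row4_info]

theorem rho_enc (t : Fin 12 → ZMod 16) (j : Fin 24) : rho (enc t j) = enc4 (fun i => rho (t i)) j := by
  rw [enc_apply, map_sum]; simp only [map_mul]; rfl

/-- The code is self-orthogonal modulo 4. -/
theorem row4_orth : ∀ i k, ∑ j, row4 i j * row4 k j = 0 := by decide +kernel

/-- Let `(P | 1)` be the generator matrix modulo 4, with `P` on the check positions. Then `PᵀP =
-1`, and the statement expresses this together with `1ᵀP = P`. -/
theorem row4_gram : ∀ j j' : Fin 24, (j < 11 ∨ j = 23) → ∑ k, row4 k j' * row4 k j =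
    (∑ i, if info i = j' then row4 i j else 0) - if j' = j then 1 else 0 := by decide +kernel

/-- The code modulo 4 is self-dual: by `row4_gram`, a dual vector is recovered from its entries at
the information positions. -/
theorem dual_iff (b : Fin 24 → ZMod 4) : Dual b ↔ ∃ t, b = enc4 t := by
  constructor
  · intro h
    refine ⟨fun i => b (info i), ?_⟩
    funext j
    by_cases hj : j < 11 ∨ j = 23
    · have h0 : ∑ k, (∑ j', b j' * row4 k j') * row4 k j = 0 :=
        Finset.sum_eq_zero fun k _ => by
          have := h _ (row_mem k)
          simp only [row4]
          rw [this, zero_mul]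
      have h1 : ∑ k, (∑ j', b j' * row4 k j') * row4 k j =
          ∑ j', b j' * ((∑ i, if info i = j' then row4 i j else 0) - if j' = j then 1 else 0) := by
        simp only [Finset.sum_mul]
        rw [Finset.sum_comm]
        refine Finset.sum_congr rfl fun j' _ => ?_
        rw [← row4_gram j j' hj, Finset.mul_sum]
        exact Finset.sum_congr rfl fun k _ => by ring
      rw [h1] at h0
      simp only [mul_sub, Finset.sum_sub_distrib, mul_ite, mul_one, mul_zero, Finset.mul_sum,
        Finset.sum_ite_eq', Finset.mem_univ, if_true] at h0
      rw [Finset.sum_comm] at h0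
      simp only [Finset.sum_ite_eq, Finset.mem_univ, if_true] at h0
      exact (sub_eq_zero.mp h0).symm
    · have : ∃ k, info k = j := by revert j; decide
      obtain ⟨k, rfl⟩ := this
      exact (enc4_info (fun i => b (info i)) k).symm
  · rintro ⟨t, rfl⟩ c ⟨s, rfl⟩
    simp only [rho_enc, enc4, Finset.sum_mul, Finset.mul_sum]
    rw [Finset.sum_comm]
    refine Finset.sum_eq_zero fun i _ => ?_
    rw [Finset.sum_comm]
    refine Finset.sum_eq_zero fun k _ => ?_
    have := congrArg (fun x => t k * rho (s i) * x) (row4_orth k i)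
    simp only [Finset.mul_sum, mul_zero] at this
    rw [← this]
    exact Finset.sum_congr rfl fun j _ => by ring

theorem sum_Dual {M : Type*} [AddCommMonoid M] (f : (Fin 24 → ZMod 4) → M) :
    (∑ b, if Dual b then f b else 0) = ∑ t, f (enc4 t) := by
  rw [← Finset.sum_filter]
  have : (Finset.univ.filter fun b => Dual b) = Finset.univ.image enc4 := by
    ext b
    simp [dual_iff, eq_comm]
  have hinj : Function.Injective enc4 := fun s t h => by
    funext k; rw [← enc4_info s, ← enc4_info t, h]
  rw [this, Finset.sum_image fun _ _ _ _ h => hinj h]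

theorem dual_comp {π : Equiv.Perm (Fin 24)} (hπ : IsAut π) (b : Fin 24 → ZMod 4) :
    Dual (b ∘ π) ↔ Dual b := by
  constructor
  · intro h c hc
    have := h _ ((hπ c).2 hc)
    rw [← Equiv.sum_comp π]
    exact this
  · intro h c hc
    have hc' : c ∘ π.symm ∈ Code := by
      rw [← hπ, Function.comp_assoc, Equiv.symm_comp_self]; exact hc
    have := h _ hc'
    rw [← Equiv.sum_comp π] at this
    simpa using this

/-! ### Identification of the lifted code -/

section
open scoped Polynomial

/-- The codeword of `x^l` times the generator polynomial, extended by its parity check. -/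
def shiftVec (e : Bool) (l : Fin 12) (j : Fin 24) : ZMod 16 :=
  if j = 23 then -(coefs e).sum else if (l : ℕ) ≤ j then (coefs e).getD (j - l) 0 else 0

/-- The coordinates of row `i` (reversed, for `e = false`) with respect to the vectors `shiftVec e
l`. They come from the power series inverse to the generator polynomial or to its reciprocal. -/
def quo (e : Bool) (i l : Fin 12) : ZMod 16 :=
  if e then (if (i : ℕ) + l ≤ 11 then
      [1, 9, 13, 5, 7, 8, 4, 11, 10, 8, 13, 6].getD (11 - (i + l)) 0 else 0)
    else if i ≤ l then [15, 7, 3, 11, 9, 8, 12, 5, 6, 8, 3, 10].getD (l - i) 0 else 0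

theorem row_eq_quo : ∀ i j, row i j = ∑ l, quo true i l * shiftVec true l j := by decide +kernel

theorem row_rev_eq_quo : ∀ i j, row i (rev j) = ∑ l, quo false i l * shiftVec false l j := by
  decide +kernel

theorem shiftVec_sum : ∀ e l, shiftVec e l (Fin.last 23) =
    -∑ j : Fin 23, shiftVec e l (Fin.castSucc j) := by decide +kernel

theorem monic_coefs (e : Bool) : (ofList (coefs e)).Monic :=
  monic_ofList _ (coefs_length e) (coefs_lead e)

theorem natDegree_coefs (e : Bool) : (ofList (coefs e)).natDegree = 11 :=
  natDegree_ofList _ (coefs_length e) (coefs_lead e)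

theorem monic_cyc : (Polynomial.X ^ 23 - 1 : (ZMod 16)[X]).Monic :=
  Polynomial.monic_X_pow_sub_C 1 (by norm_num)

theorem natDegree_cyc : (Polynomial.X ^ 23 - 1 : (ZMod 16)[X]).natDegree = 23 :=
  Polynomial.natDegree_X_pow_sub_C (r := 1)

variable {g : (ZMod 2)[X]} {g4 : (ZMod 16)[X]} {C : Submodule (ZMod 16) (Fin 24 → ZMod 16)}

theorem shiftVec_mem {e : Bool} (he : g4 = ofList (coefs e))
    (hC : IsLiftedQR (by norm_num : (2 : ℕ) ∣ 16) g g4 C) (l : Fin 12) : shiftVec e l ∈ C := by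
  obtain ⟨-, -, -, -, h⟩ := hC
  rw [h]
  refine ⟨⟨Polynomial.X ^ (l : ℕ), fun j => ?_⟩, shiftVec_sum e l⟩
  rw [he, (Polynomial.modByMonic_eq_self_iff monic_cyc).2, Polynomial.coeff_X_pow_mul', shiftVec,
    if_neg, coeff_ofList]
  · rfl
  · intro hj
    have := congrArg Fin.val hj
    simp at this
    omega
  · rw [Polynomial.degree_eq_natDegree monic_cyc.ne_zero, natDegree_cyc]
    refine lt_of_le_of_lt Polynomial.degree_le_natDegree (Nat.cast_lt.2 ?_)
    refine lt_of_le_of_lt Polynomial.natDegree_mul_le ?_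
    rw [natDegree_coefs, Polynomial.natDegree_X_pow]
    omega

/-- A codeword is given by a multiple of the generator polynomial of degree less than 23. -/
theorem exists_poly (hC : IsLiftedQR (by norm_num : (2 : ℕ) ∣ 16) g g4 C)
    {c : Fin 24 → ZMod 16} (hc : c ∈ C) :
    ∃ r : (ZMod 16)[X], g4 ∣ r ∧ r.natDegree < 23 ∧ (∀ j : Fin 23, c (Fin.castSucc j) = r.coeff j) ∧
      c (Fin.last 23) = -∑ j : Fin 23, c (Fin.castSucc j) := by
  obtain ⟨-, -, hd, -, h⟩ := hC
  obtain ⟨⟨f, hf⟩, hs⟩ := (h c).1 hc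
  refine ⟨_, ?_, ?_, hf, hs⟩
  · rw [Polynomial.modByMonic_eq_sub_mul_div (f * g4)]
    exact dvd_sub (Dvd.intro_left _ rfl) (hd.mul_right _)
  · have := Polynomial.natDegree_modByMonic_lt (f * g4) monic_cyc (fun h => by
      have := natDegree_cyc
      rw [h, Polynomial.natDegree_one] at this
      omega)
    rwa [natDegree_cyc] at this

theorem eq_zero_of_poly {c : Fin 24 → ZMod 16} {r : (ZMod 16)[X]}
    (h : ∀ j : Fin 23, c (Fin.castSucc j) = r.coeff j)
    (hs : c (Fin.last 23) = -∑ j : Fin 23, c (Fin.castSucc j)) (hr : r = 0) : c = 0 := by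
  subst hr
  simp only [Polynomial.coeff_zero] at h
  funext j
  refine Fin.lastCases ?_ (fun i => ?_) j
  · rw [hs]; simp [h]
  · exact h i

/-- A multiple of the generator polynomial whose coefficients of `x^11, …, x^22` vanish has degree
at most 10, hence is zero. -/
theorem zero_of_high (hC : IsLiftedQR (by norm_num : (2 : ℕ) ∣ 16) g g4 C)
    {c : Fin 24 → ZMod 16} (hc : c ∈ C) (h : ∀ i, c (info i) = 0) : c = 0 := by
  obtain ⟨r, hd, hdeg, hcoef, hs⟩ := exists_poly hC hc
  obtain ⟨hm, h11, -⟩ := hC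
  refine eq_zero_of_poly hcoef hs ?_
  by_contra hr
  refine hm.not_dvd_of_natDegree_lt hr ?_ hd
  rw [h11, Nat.lt_succ_iff, Polynomial.natDegree_le_iff_coeff_eq_zero]
  intro n hn
  by_cases hn' : n < 23
  · have h1 := h ⟨22 - n, by omega⟩
    have h2 := hcoef ⟨n, hn'⟩
    rw [← h2, ← h1]
    congr 1
    ext
    simp [info]
    omega
  · exact Polynomial.coeff_eq_zero_of_natDegree_lt (by omega)

theorem rev_info : ∀ i, rev (info i) = Fin.castLE (by norm_num) i := by decide

/-- A multiple of the generator polynomial divisible by `x^12` is zero: the generator is coprime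
to `x`, so it divides a quotient of degree at most 10. -/
theorem zero_of_low (hC : IsLiftedQR (by norm_num : (2 : ℕ) ∣ 16) g g4 C)
    {c : Fin 24 → ZMod 16} (hc : c ∈ C) (h : ∀ i, c (rev (info i)) = 0) : c = 0 := by
  obtain ⟨r, hd, hdeg, hcoef, hs⟩ := exists_poly hC hc
  obtain ⟨hm, h11, hx, -⟩ := hC
  refine eq_zero_of_poly hcoef hs ?_
  have hX : Polynomial.X ^ 12 ∣ r := by
    rw [Polynomial.X_pow_dvd_iff]
    intro d hd
    have h1 := h ⟨d, hd⟩
    rw [rev_info] at h1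
    have h2 := hcoef ⟨d, by omega⟩
    rw [← h2, ← h1]
    rfl
  obtain ⟨s, rfl⟩ := hX
  have hco : IsCoprime g4 (Polynomial.X ^ 12 : (ZMod 16)[X]) := by
    obtain ⟨k, hk⟩ := hx
    exact ⟨-k, Polynomial.X ^ 11, by linear_combination hk⟩
  have hds := hco.dvd_of_dvd_mul_left hd
  by_contra hr
  have hs0 : s ≠ 0 := by rintro rfl; simp at hr
  refine hm.not_dvd_of_natDegree_lt hs0 ?_ hds
  rw [mul_comm, Polynomial.natDegree_mul_X_pow _ hs0] at hdeg
  omega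

/-- Every lifted extended quadratic residue code of length 24 modulo 16 is the explicit code, up
to a permutation of the coordinates. -/
theorem code_eq (hg : IsQRFactor 2 g) (hC : IsLiftedQR (by norm_num : (2 : ℕ) ∣ 16) g g4 C) :
    ∃ π : Equiv.Perm (Fin 24), ∀ c, c ∘ π ∈ C ↔ c ∈ Code := by
  obtain ⟨e, he⟩ := generator_eq hg hC.1 hC.2.1 hC.2.2.1 hC.2.2.2.1
  cases e
  · refine ⟨rev, fun c => ?_⟩
    have : C.comap (LinearMap.funLeft (ZMod 16) (ZMod 16) rev) = Code := by
      apply eq_Code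
      · intro i
        rw [Submodule.mem_comap]
        have h : LinearMap.funLeft (ZMod 16) (ZMod 16) rev (row i) =
            ∑ l, quo false i l • shiftVec false l := by
          funext j
          simp only [Finset.sum_apply, Pi.smul_apply, smul_eq_mul]
          exact row_rev_eq_quo i j
        rw [h]
        exact C.sum_mem fun l _ => C.smul_mem _ (shiftVec_mem he hC l)
      · intro c hc h
        have h0 := zero_of_low hC hc fun i => by
          have h2 : ∀ j, rev (rev j) = j := by decide
          rw [LinearMap.funLeft_apply, h2, h]
        funext j
        have := congrFun h0 (rev.symm j)
        rwa [LinearMap.funLeft_apply, Equiv.apply_symm_apply] at this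
    rw [← this]; rfl
  · refine ⟨Equiv.refl _, fun c => ?_⟩
    have : C = Code := by
      apply eq_Code
      · intro i
        have h : row i = ∑ l, quo true i l • shiftVec true l := by
          funext j
          simp only [Finset.sum_apply, Pi.smul_apply, smul_eq_mul]
          exact row_eq_quo i j
        rw [h]
        exact C.sum_mem fun l _ => C.smul_mem _ (shiftVec_mem he hC l)
      · exact fun c hc h => zero_of_high hC hc h
    rw [this]; rfl

end

/-! ### The Fourier transform -/

/-- The polynomial ring with coefficients extended to `ℂ`, which contains the values of `chi`. -/
abbrev R := MvPolynomial (Fin 5) ℂ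

/-- The character `z ↦ i^z` of `ℤ/4`. -/
def chi (z : ZMod 4) : ℂ := Complex.I ^ z.val

theorem chi_zero : chi 0 = 1 := by simp [chi]

theorem chi_add (a b : ZMod 4) : chi (a + b) = chi a * chi b := by
  rw [chi, chi, chi, ← pow_add, ZMod.val_add, ← pow_eq_pow_mod _ Complex.I_pow_four]

theorem chi_eq_one {a : ZMod 4} (h : chi a = 1) : a = 0 := by
  revert h
  have hI : (-Complex.I = 1) → False := fun h => by simpa using congrArg Complex.re h
  have hI' : (Complex.I = 1) → False := fun h => by simpa using congrArg Complex.re h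
  fin_cases a
  · intro _; rfl
  · intro h; exact (hI' (by simpa [chi, ZMod.val] using h)).elim
  · intro h
    have h2 : Complex.I ^ 2 = 1 := h
    rw [Complex.I_sq] at h2
    norm_num at h2
  · intro h
    have h2 : Complex.I ^ 3 = 1 := h
    rw [Complex.I_pow_three] at h2
    exact (hI h2).elim

theorem chi_sum {ι : Type*} (s : Finset ι) (f : ι → ZMod 4) :
    chi (∑ i ∈ s, f i) = ∏ i ∈ s, chi (f i) := by
  induction s using Finset.induction_on with
  | empty => simp [chi_zero]
  | insert a s ha ih => rw [Finset.sum_insert ha, Finset.prod_insert ha, chi_add, ih]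

/-- The residue `k` modulo 4 of an element `c = 4 k`; only such elements matter. -/
def quarter (c : ZMod 16) : ZMod 4 := ((c.val / 4 : ℕ) : ZMod 4)

/-- The variable attached to a Fourier index: `z` for 0, `y_1` for 2, and `y_0` for 1 and 3. The
variables `x_0, x_1, y_0, y_1, z` are `X 0, …, X 4`. -/
def yv (b : ZMod 4) : R := if b = 0 then X 4 else if b = 2 then X 3 else X 2

/-- The contribution of the Fourier index `b` to a coordinate `c`: it is `i^(b k) y_b` if `c = 4
k`; otherwise `c` contributes `x_0` or `x_1`, placed at `b = 0`. -/
def theta (c : ZMod 16) (b : ZMod 4) : R :=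
  if rho c = 0 then C (chi (b * quarter c)) * yv b
  else if b = 0 then (if c.val % 2 = 1 then X 0 else X 1) else 0

/-- The modulation law: adding `4 d` to the coordinate multiplies the contribution by a character
value. -/
theorem theta_shift (c d : ZMod 16) (b : ZMod 4) :
    theta (c + 4 * d) b = C (chi (b * rho d)) * theta c b := by
  have h1 : ∀ c d : ZMod 16, rho (c + 4 * d) = rho c := by decide +kernel
  have h2 : ∀ c d : ZMod 16, (c + 4 * d).val % 2 = c.val % 2 := by decide +kernel
  have h3 : ∀ c d : ZMod 16, rho c = 0 → quarter (c + 4 * d) = quarter c + rho d := by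
    decide +kernel
  unfold theta
  rw [h1, h2]
  split_ifs with h h' h''
  · rw [h3 c d h, mul_add, chi_add, C_mul]; ring
  · rw [h', zero_mul, chi_zero, C_1, one_mul]
  · rw [h', zero_mul, chi_zero, C_1, one_mul]
  · rw [mul_zero]

/-- The monomial of a pair `(c, b)`: the product of the contributions of the coordinates. -/
def T (c : Fin 24 → ZMod 16) (b : Fin 24 → ZMod 4) : R := ∏ j, theta (c j) (b j)

theorem T_shift (c d : Fin 24 → ZMod 16) (b : Fin 24 → ZMod 4) :
    T (c + (4 : ZMod 16) • d) b = C (chi (∑ j, b j * rho (d j))) * T c b := by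
  unfold T
  simp only [Pi.add_apply, Pi.smul_apply, smul_eq_mul, theta_shift]
  rw [Finset.prod_mul_distrib, chi_sum, map_prod]

theorem T_comp (π : Equiv.Perm (Fin 24)) (c : Fin 24 → ZMod 16) (b : Fin 24 → ZMod 4) :
    T (c ∘ π) (b ∘ π) = T c b :=
  Equiv.prod_comp π fun j => theta (c j) (b j)

/-- The polynomial substituted for a coordinate of value `c`; see `map_subst5`. -/
def wt (c : ZMod 16) : R := ∑ b, theta c b

/-- Orthogonality of characters, applied to the subgroup `4 * Code` of translations. -/
theorem sum_T_eq_zero {b : Fin 24 → ZMod 4} (hb : ¬ Dual b) :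
    (∑ c, if c ∈ Code then T c b else 0) = 0 := by
  simp only [Dual, not_forall] at hb
  obtain ⟨d, hd, hne⟩ := hb
  set S := ∑ c, if c ∈ Code then T c b else 0 with hS
  have h : S = C (chi (∑ j, b j * rho (d j))) * S := by
    conv_lhs => rw [hS, ← Equiv.sum_comp (Equiv.addRight ((4 : ZMod 16) • d))]
    rw [hS, Finset.mul_sum]
    refine Finset.sum_congr rfl fun c _ => ?_
    have hm : c + (4 : ZMod 16) • d ∈ Code ↔ c ∈ Code :=
      Code.add_mem_iff_left (Code.smul_mem _ hd)
    simp only [Equiv.coe_addRight, hm, T_shift]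
    split_ifs
    · rfl
    · rw [mul_zero]
  have h2 : C (1 - chi (∑ j, b j * rho (d j))) * S = 0 := by
    rw [C_sub, C_1]; linear_combination h
  rcases mul_eq_zero.1 h2 with h3 | h3
  · exfalso
    rw [C_eq_zero, sub_eq_zero] at h3
    exact hne (chi_eq_one h3.symm)
  · exact h3

/-- A MacWilliams identity: only dual vectors contribute. -/
theorem fourier : (∑ c, if c ∈ Code then ∏ j, wt (c j) else 0) =
    ∑ c, if c ∈ Code then (∑ b, if Dual b then T c b else 0) else 0 := by
  have h1 : ∀ c : Fin 24 → ZMod 16, ∏ j, wt (c j) = ∑ b, T c b := by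
    intro c
    simp only [wt, T]
    rw [Finset.prod_univ_sum, Fintype.piFinset_univ]
  have h2 : ∀ (c : Fin 24 → ZMod 16) (f : (Fin 24 → ZMod 4) → R),
      (if c ∈ Code then ∑ b, f b else 0) = ∑ b, if c ∈ Code then f b else 0 := by
    intro c f; split_ifs <;> simp
  simp only [h1, h2]
  rw [Finset.sum_comm, Finset.sum_comm (f := fun c b =>
    if c ∈ Code then if Dual b then T c b else 0 else 0)]
  refine Finset.sum_congr rfl fun b _ => ?_
  by_cases hb : Dual b
  · simp only [hb, if_true]
  · rw [sum_T_eq_zero hb]; simp [hb]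

/-! ### Projection onto the monomials divisible by `x_0 y_0` -/

/-- The substitution of 0 for the variable `X i`. -/
def kill (i : Fin 5) : R →ₐ[ℂ] R := aeval fun k => if k = i then 0 else X k

theorem coeff_kill (i : Fin 5) (P : R) (e : Fin 5 →₀ ℕ) :
    coeff e (kill i P) = if e i = 0 then coeff e P else 0 := by
  induction P using MvPolynomial.induction_on' with
  | add p q hp hq => rw [map_add, coeff_add, hp, hq, coeff_add]; split_ifs <;> simp
  | monomial u a =>
    have : kill i (monomial u a) = if u i = 0 then monomial u a else 0 := by
      rw [kill, aeval_monomial, Finsupp.prod_fintype _ _ (by simp)]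
      split_ifs with h
      · rw [monomial_eq, Finsupp.prod_fintype _ _ (by simp), algebraMap_eq]
        refine congrArg (C a * ·) (Finset.prod_congr rfl fun k _ => ?_)
        split_ifs with hk
        · subst hk; simp [h]
        · rfl
      · rw [Finset.prod_eq_zero (Finset.mem_univ i), mul_zero]
        simp [h]
    rw [this]
    by_cases hu : u = e
    · subst hu; split_ifs <;> simp
    · split_ifs <;> simp [coeff_monomial, hu]

/-- The projection onto the monomials divisible by `X 0 * X 2`, by inclusion and exclusion. -/
def proj : R →ₗ[ℂ] R :=
  LinearMap.id - (kill 0).toLinearMap - (kill 2).toLinearMap +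
    (kill 0).toLinearMap.comp (kill 2).toLinearMap

theorem proj_apply (P : R) : proj P = P - kill 0 P - kill 2 P + kill 0 (kill 2 P) := rfl

theorem map_divPart (A : MvPolynomial (Fin 5) ℚ) :
    map (algebraMap ℚ ℂ) (divPart A 0 2) = proj (map (algebraMap ℚ ℂ) A) := by
  have h : ∀ e, coeff e (divPart A 0 2) = if e 0 ≠ 0 ∧ e 2 ≠ 0 then coeff e A else 0 := by
    intro e
    simp only [divPart, coeff_sum, coeff_monomial]
    rw [Finset.sum_ite_eq']
    simp only [Finset.mem_filter, mem_support_iff]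
    split_ifs with h1 h2 h2
    · rfl
    · exact absurd h1.2 h2
    · by_contra h3; exact h1 ⟨Ne.symm h3, h2⟩
    · rfl
  ext e
  rw [coeff_map, h, proj_apply]
  simp only [coeff_add, coeff_sub, coeff_kill, coeff_map]
  by_cases h0 : e 0 = 0 <;> by_cases h2 : e 2 = 0 <;> simp [h0, h2]

theorem kill_zero_theta (c : ZMod 16) (b : ZMod 4) :
    kill 0 (theta c b) = if c.val.testBit 0 then 0 else theta c b := by
  have h1 : ∀ c : ZMod 16, rho c = 0 → c.val.testBit 0 = false := by decide +kernel
  have h2 : ∀ c : ZMod 16, c.val.testBit 0 = true ↔ c.val % 2 = 1 := by decide +kernel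
  unfold theta
  by_cases h : rho c = 0
  · simp only [h, h1 c h, if_true, Bool.false_eq_true, if_false, yv, map_mul]
    simp only [kill, algHom_C, algebraMap_eq]
    congr 1
    split_ifs <;> simp
  · simp only [h, if_false, h2]
    split_ifs <;> simp [kill]

theorem kill_two_theta (c : ZMod 16) (b : ZMod 4) :
    kill 2 (theta c b) = if b.val.testBit 0 then 0 else theta c b := by
  have h2 : ∀ b : ZMod 4, b.val.testBit 0 = true ↔ (b ≠ 0 ∧ b ≠ 2) := by decide +kernel
  unfold theta yv
  simp only [h2]
  by_cases h : rho c = 0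
  · simp only [h, if_true, map_mul]
    simp only [kill, algHom_C, algebraMap_eq]
    by_cases hb : b = 0
    · simp [hb]
    · by_cases hb' : b = 2
      · have : (2 : ZMod 4) ≠ 0 := by decide
        simp [hb', this]
      · simp [hb, hb']
  · simp only [h, if_false]
    by_cases hb : b = 0
    · simp only [hb, if_true]
      split_ifs <;> simp_all [kill]
    · simp [hb]

theorem prod_cond {p : Fin 24 → Bool} (f : Fin 24 → R) :
    (∏ j, if p j then 0 else f j) = if p = fun _ => false then ∏ j, f j else 0 := by
  split_ifs with h
  · subst h; simp
  · have : ∃ j, p j = true := by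
      by_contra hc
      apply h
      funext j
      simp only [not_exists, Bool.not_eq_true] at hc
      exact hc j
    obtain ⟨j, hj⟩ := this
    exact Finset.prod_eq_zero (Finset.mem_univ j) (by simp [hj])

theorem kill_zero_T (c : Fin 24 → ZMod 16) (b : Fin 24 → ZMod 4) :
    kill 0 (T c b) = if par c = fun _ => false then T c b else 0 := by
  rw [T, map_prod, ← prod_cond]
  exact Finset.prod_congr rfl fun j _ => kill_zero_theta _ _

theorem kill_two_T (c : Fin 24 → ZMod 16) (b : Fin 24 → ZMod 4) :
    kill 2 (T c b) = if par b = fun _ => false then T c b else 0 := by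
  rw [T, map_prod, ← prod_cond]
  exact Finset.prod_congr rfl fun j _ => kill_two_theta _ _

theorem proj_T (c : Fin 24 → ZMod 16) (b : Fin 24 → ZMod 4) :
    proj (T c b) = if par c = (fun _ => false) then 0 else if par b = (fun _ => false) then 0
      else T c b := by
  rw [proj_apply, kill_two_T, kill_zero_T]
  by_cases h1 : par b = fun _ => false
  · simp only [h1, if_true, kill_zero_T]
    split_ifs <;> simp
  · simp only [h1, if_false, map_zero]
    split_ifs <;> simp

/-- The sum of `T c b` over the dual vectors `b` with an odd coordinate. -/
def ff (c : Fin 24 → ZMod 16) : R :=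
  ∑ b, if Dual b then (if par b = (fun _ => false) then 0 else T c b) else 0

/-- The monomials divisible by `x_0 y_0` come from the pairs in which both vectors have an odd
coordinate. -/
theorem proj_fourier : proj (∑ c, if c ∈ Code then ∏ j, wt (c j) else 0) =
    ∑ c, if c ∈ Code then (if par c = (fun _ => false) then 0 else ff c) else 0 := by
  rw [fourier, map_sum]
  refine Finset.sum_congr rfl fun c _ => ?_
  split_ifs with h1 h2
  · rw [map_sum]
    refine Finset.sum_eq_zero fun b _ => ?_
    split_ifs
    · rw [proj_T, if_pos h2]
    · simp
  · rw [map_sum, ff]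
    refine Finset.sum_congr rfl fun b _ => ?_
    split_ifs with h3 h4
    · rw [proj_T, if_neg h2, if_pos h4]
    · rw [proj_T, if_neg h2, if_neg h4]
    · simp
  · simp

/-! ### The substitution in the weight enumerator -/

/-- The substitution in the definition of `A_{2,2}`. -/
def subst5 : Fin 5 → MvPolynomial (Fin 5) ℚ :=
  ![X 0, X 1, X 4 - X 3, X 4 + X 3 - 2 * X 2, X 4 + X 3 + 2 * X 2]

/-- The index of the variable recording a coordinate `c`: its 2-adic valuation, or 4 for `c = 0`. -/
def valIdx (c : ZMod 16) : Fin 5 :=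
  if c = 0 then 4 else if c.val % 2 = 1 then 0 else if c.val % 4 = 2 then 1
    else if c.val = 8 then 3 else 2

theorem padicVal_iff (x : ZMod 16) (i : Fin 4) :
    (x ≠ 0 ∧ padicValNat 2 x.val = (i : ℕ)) ↔ valIdx x = Fin.castSucc i := by
  by_cases hx : x = 0
  · subst hx; revert i; decide
  have hval : x.val ≠ 0 := by rwa [Ne, ZMod.val_eq_zero]
  have : padicValNat 2 x.val = (valIdx x : ℕ) := by
    symm
    have h1 : ∀ x : ZMod 16, x ≠ 0 → 2 ^ (valIdx x : ℕ) ∣ x.val ∧ ¬ 2 ^ ((valIdx x : ℕ) + 1) ∣ x.val := by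
      decide
    have := Fact.mk Nat.prime_two
    obtain ⟨ha, hb⟩ := h1 x hx
    rw [padicValNat_dvd_iff_le hval] at ha hb
    omega
  rw [this, Fin.ext_iff]
  simp [hx]

theorem zero_iff (x : ZMod 16) : x = 0 ↔ valIdx x = Fin.last 4 := by
  revert x; decide

theorem pow_card {A : Type*} [CommMonoid A] (p : Fin 24 → Prop) [DecidablePred p] (a : A) :
    a ^ (Finset.univ.filter p).card = ∏ j, if p j then a else 1 := by
  rw [← Finset.prod_filter, Finset.prod_const]

theorem aeval_swe (D : Submodule (ZMod 16) (Fin 24 → ZMod 16)) :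
    aeval subst5 (swe 2 4 D) = ∑ c, if c ∈ D then ∏ j, subst5 (valIdx (c j)) else 0 := by
  rw [swe, map_sum]
  refine Finset.sum_congr rfl fun c _ => ?_
  split_ifs with h
  · simp only [map_mul, map_prod, map_pow, aeval_X]
    simp only [padicVal_iff, zero_iff, pow_card]
    rw [Finset.prod_comm, ← Finset.prod_mul_distrib]
    refine Finset.prod_congr rfl fun j _ => ?_
    rw [← Fin.prod_univ_castSucc (fun i : Fin 5 => if valIdx (c j) = i then subst5 i else 1)]
    simp
  · simp

/-- The substituted linear forms are Fourier transforms. For instance `y_1` has coefficient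
`(-1)^k` and `y_0` has coefficient `i^k + i^(3 * k)` in the form for `c = 4 k`. -/
theorem map_subst5 (c : ZMod 16) : map (algebraMap ℚ ℂ) (subst5 (valIdx c)) = wt c := by
  have key : ∀ c : ZMod 16, wt c = if rho c = 0 then
      X 4 + C (chi (quarter c)) * X 2 + C (chi (2 * quarter c)) * X 3 +
        C (chi (3 * quarter c)) * X 2 else if c.val % 2 = 1 then X 0 else X 1 := by
    intro c
    have hu : (Finset.univ : Finset (ZMod 4)) = {0, 1, 2, 3} := by decide
    have h01 : (0 : ZMod 4) ∉ ({1, 2, 3} : Finset (ZMod 4)) := by decide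
    have h1 : (1 : ZMod 4) ∉ ({2, 3} : Finset (ZMod 4)) := by decide
    have h2 : (2 : ZMod 4) ∉ ({3} : Finset (ZMod 4)) := by decide
    rw [wt, hu, Finset.sum_insert h01, Finset.sum_insert h1, Finset.sum_insert h2,
      Finset.sum_singleton]
    have a1 : (1 : ZMod 4) ≠ 0 := by decide
    have a2 : (2 : ZMod 4) ≠ 0 := by decide
    have a3 : (3 : ZMod 4) ≠ 0 := by decide
    have a4 : (1 : ZMod 4) ≠ 2 := by decide
    have a5 : (3 : ZMod 4) ≠ 2 := by decide
    simp only [theta, yv, a1, a2, a3, a4, a5, if_true, if_false]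
    split_ifs
    · rw [zero_mul, chi_zero, C_1, one_mul, one_mul]; ring
    · ring
    · ring
  have hc1 : chi 1 = Complex.I := pow_one _
  have hc2 : chi 2 = -1 := Complex.I_sq
  have hc3 : chi 3 = -Complex.I := Complex.I_pow_three
  rw [key]
  have hcases : ∀ c : ZMod 16,
      (rho c ≠ 0 ∧ c.val % 2 = 1 ∧ valIdx c = 0) ∨
      (rho c ≠ 0 ∧ c.val % 2 ≠ 1 ∧ valIdx c = 1) ∨
      (rho c = 0 ∧ (quarter c = 1 ∧ 2 * quarter c = 2 ∧ 3 * quarter c = 3) ∧ valIdx c = 2) ∨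
      (rho c = 0 ∧ (quarter c = 3 ∧ 2 * quarter c = 2 ∧ 3 * quarter c = 1) ∧ valIdx c = 2) ∨
      (rho c = 0 ∧ (quarter c = 2 ∧ 2 * quarter c = 0 ∧ 3 * quarter c = 2) ∧ valIdx c = 3) ∨
      (rho c = 0 ∧ (quarter c = 0 ∧ 2 * quarter c = 0 ∧ 3 * quarter c = 0) ∧ valIdx c = 4) := by
    decide +kernel
  rcases hcases c with ⟨h1, h2, h3⟩ | ⟨h1, h2, h3⟩ | ⟨h1, ⟨h2, h4, h5⟩, h3⟩ |
    ⟨h1, ⟨h2, h4, h5⟩, h3⟩ | ⟨h1, ⟨h2, h4, h5⟩, h3⟩ | ⟨h1, ⟨h2, h4, h5⟩, h3⟩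
  · rw [h3, if_neg h1, if_pos h2]; simp [subst5]
  · rw [h3, if_neg h1, if_neg h2]; simp [subst5]
  · rw [h3, if_pos h1, h5, h4, h2, hc1, hc2, hc3]; simp [subst5]; ring
  · rw [h3, if_pos h1, h5, h4, h2, hc1, hc2, hc3]; simp [subst5]; ring
  · rw [h3, if_pos h1, h5, h4, h2, hc2, chi_zero]; simp [subst5]; ring
  · rw [h3, if_pos h1, h5, h4, h2, chi_zero]; simp [subst5]; ring

theorem map_aeval_swe {D : Submodule (ZMod 16) (Fin 24 → ZMod 16)} {π : Equiv.Perm (Fin 24)}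
    (h : ∀ c, c ∘ π ∈ D ↔ c ∈ Code) :
    map (algebraMap ℚ ℂ) (aeval subst5 (swe 2 4 D)) =
      ∑ c, if c ∈ Code then ∏ j, wt (c j) else 0 := by
  rw [aeval_swe, map_sum, ← Equiv.sum_comp (Equiv.arrowCongr π.symm (Equiv.refl (ZMod 16)))]
  refine Finset.sum_congr rfl fun c _ => ?_
  have hc : Equiv.arrowCongr π.symm (Equiv.refl (ZMod 16)) c = c ∘ π := by
    funext j; rfl
  rw [hc]
  simp only [h]
  split_ifs
  · rw [map_prod]
    simp only [map_subst5, Function.comp]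
    exact Equiv.prod_comp π fun j => wt (c j)
  · simp

/-! ### Invariance under automorphisms -/

/-- The contribution of the codewords whose reduction modulo 2 is the binary word `w`. -/
def Psi (w : Fin 24 → Bool) : R := ∑ c, if c ∈ Code then (if par c = w then ff c else 0) else 0

theorem par_comp {N : ℕ} (π : Equiv.Perm (Fin 24)) (c : Fin 24 → ZMod N) : par (c ∘ π) = par c ∘ π := rfl

theorem ff_comp {π : Equiv.Perm (Fin 24)} (hπ : IsAut π) (c : Fin 24 → ZMod 16) :
    ff (c ∘ π) = ff c := by
  rw [ff, ← Equiv.sum_comp (Equiv.arrowCongr π.symm (Equiv.refl (ZMod 4)))]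
  refine Finset.sum_congr rfl fun b _ => ?_
  have hb : Equiv.arrowCongr π.symm (Equiv.refl (ZMod 4)) b = b ∘ π := by
    funext j; rfl
  have h0 : (par b ∘ π = fun _ => false) ↔ (par b = fun _ => false) :=
    π.surjective.injective_comp_right.eq_iff' rfl
  rw [hb]
  simp only [dual_comp hπ, T_comp, par_comp, h0]

theorem Psi_comp {π : Equiv.Perm (Fin 24)} (hπ : IsAut π) (w : Fin 24 → Bool) :
    Psi (w ∘ π) = Psi w := by
  rw [Psi, ← Equiv.sum_comp (Equiv.arrowCongr π.symm (Equiv.refl (ZMod 16)))]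
  refine Finset.sum_congr rfl fun c _ => ?_
  have hc : Equiv.arrowCongr π.symm (Equiv.refl (ZMod 16)) c = c ∘ π := by
    funext j; rfl
  have h0 : par c ∘ π = w ∘ π ↔ par c = w := π.surjective.injective_comp_right.eq_iff
  rw [hc]
  have := hπ c
  simp only [this, ff_comp hπ, par_comp, h0]

/-! ### Sums over codewords as sums over lists -/

/-- A binary digit as an element of `ℤ/16`. -/
def b16 (b : Bool) : ZMod 16 := cond b 1 0

/-- Elements of `ℤ/16` as `a + 2 b + 4 u`, with two binary digits and a digit `u` in base 4. -/
def digits16 : Bool × Bool × ZMod 4 ≃ ZMod 16 :=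
  Equiv.ofBijective (fun x => b16 x.1 + 2 * b16 x.2.1 + 4 * (x.2.2.val : ZMod 16)) (by decide)

/-- Elements of `ℤ/4` as `a + 2 b`, with two binary digits. -/
def digits4 : Bool × Bool ≃ ZMod 4 :=
  Equiv.ofBijective (fun x => rho (b16 x.1 + 2 * b16 x.2)) (by decide)

theorem sum_digits16 (F : (Fin 12 → ZMod 16) → R) :
    ∑ t, F t = ∑ m : Fin 12 → Bool, ∑ s : Fin 12 → Bool, ∑ u : Fin 12 → ZMod 4,
      F (fun i => b16 (m i) + 2 * b16 (s i) + 4 * ((u i).val : ZMod 16)) := by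
  let E : (Fin 12 → Bool) × (Fin 12 → Bool) × (Fin 12 → ZMod 4) ≃ (Fin 12 → ZMod 16) :=
    { toFun := fun x i => digits16 (x.1 i, x.2.1 i, x.2.2 i)
      invFun := fun t => (fun i => (digits16.symm (t i)).1, fun i => (digits16.symm (t i)).2.1,
        fun i => (digits16.symm (t i)).2.2)
      left_inv := fun x => by simp
      right_inv := fun t => by simp }
  rw [← Equiv.sum_comp E, Fintype.sum_prod_type]
  refine Finset.sum_congr rfl fun m _ => ?_
  rw [Fintype.sum_prod_type]
  rfl

theorem sum_digits4 (F : (Fin 12 → ZMod 4) → R) :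
    ∑ t, F t = ∑ m : Fin 12 → Bool, ∑ s : Fin 12 → Bool,
      F (fun i => rho (b16 (m i) + 2 * b16 (s i))) := by
  let E : (Fin 12 → Bool) × (Fin 12 → Bool) ≃ (Fin 12 → ZMod 4) :=
    { toFun := fun x i => digits4 (x.1 i, x.2 i)
      invFun := fun t => (fun i => (digits4.symm (t i)).1, fun i => (digits4.symm (t i)).2)
      left_inv := fun x => by simp
      right_inv := fun t => by simp }
  rw [← Equiv.sum_comp E, Fintype.sum_prod_type]
  rfl

/-- The sum of `f` over a list. -/
def LS {α : Type} (l : List α) (f : α → R) : R := (l.map f).sum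

theorem LS_congr {α : Type} {l : List α} {f g : α → R} (h : ∀ a ∈ l, f a = g a) : LS l f = LS l g := by
  rw [LS, LS, List.map_congr_left h]

theorem LS_append {α : Type} (l l' : List α) (f : α → R) : LS (l ++ l') f = LS l f + LS l' f := by
  simp [LS]

theorem LS_cons {α : Type} (a : α) (l : List α) (f : α → R) : LS (a :: l) f = f a + LS l f := by
  simp [LS]

theorem LS_flatMap {α β : Type} (l : List α) (g : α → List β) (f : β → R) :
    LS (l.flatMap g) f = LS l fun a => LS (g a) f := by
  induction l with
  | nil => rfl
  | cons a l ih => rw [List.flatMap_cons, LS_append, ih, LS_cons]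

theorem LS_zero {α : Type} (l : List α) : (LS l fun _ => (0 : R)) = 0 := by
  simp [LS]

theorem LS_add {α : Type} (l : List α) (f g : α → R) :
    (LS l fun a => f a + g a) = LS l f + LS l g := by
  induction l with
  | nil => simp [LS]
  | cons a l ih => rw [LS_cons, LS_cons, LS_cons, ih]; ring

theorem LS_mul {α : Type} (l : List α) (x : R) (f : α → R) : (LS l fun a => x * f a) = x * LS l f := by
  induction l with
  | nil => simp [LS]
  | cons a l ih => rw [LS_cons, LS_cons, ih]; ring

theorem LS_comm {α β : Type} (l : List α) (l' : List β) (f : α → β → R) :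
    (LS l fun a => LS l' fun b => f a b) = LS l' fun b => LS l fun a => f a b := by
  induction l with
  | nil => simp [LS]
  | cons a l ih => rw [LS_cons, ih, ← LS_add]; simp only [LS_cons]

theorem sum_subs (L : List W) (H : (Fin 24 → ZMod 16) → R) :
    ∑ m : Fin L.length → Bool, H (∑ i, b16 (m i) • (L.get i).vec) =
      LS (subs L).toList fun w => H w.vec := by
  induction L generalizing H with
  | nil => simp [subs, Tr.toList, LS, vec_zero]
  | cons r L ih =>
    rw [subs, Tr.toList, LS_append, Tr.toList_map]
    have h2 : LS ((subs L).toList.map (W.add r)) (fun w => H w.vec) =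
        LS (subs L).toList fun w => H (r.vec + w.vec) := by
      simp only [LS, List.map_map, ← vec_add]; rfl
    rw [h2, ← ih H, ← ih fun c => H (r.vec + c)]
    change ∑ m : Fin (L.length + 1) → Bool, _ = _
    rw [← Equiv.sum_comp (Fin.consEquiv fun _ => Bool), Fintype.sum_prod_type, Fintype.sum_bool,
      add_comm]
    have h3 : ∀ (b : Bool) (m : Fin L.length → Bool),
        (∑ i : Fin (L.length + 1), b16 ((Fin.consEquiv fun _ => Bool) (b, m) i) • ((r :: L).get i).vec)
          = b16 b • r.vec + ∑ i, b16 (m i) • (L.get i).vec := by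
      intro b m
      rw [Fin.sum_univ_succ]
      rfl
    congr 1
    · refine Finset.sum_congr rfl fun m _ => congrArg H ?_
      refine (h3 false m).trans ?_
      simp [b16]
    · refine Finset.sum_congr rfl fun m _ => congrArg H ?_
      refine (h3 true m).trans ?_
      simp [b16]

theorem sum_words (H : (Fin 24 → ZMod 16) → R) :
    ∑ m : Fin 12 → Bool, H (enc fun i => b16 (m i)) = LS words.toList fun w => H w.vec := by
  refine Eq.trans ?_ (sum_subs rows H)
  refine Finset.sum_congr rfl fun m _ => congrArg H ?_
  funext j
  rw [enc_apply, Finset.sum_apply]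
  rfl

theorem vec_lift (a s : W) : (a.add s.dbl).vec = a.vec + (2 : ZMod 16) • s.vec := by
  rw [vec_add, vec_dbl]
  congr 1
  funext j
  simp

/-- The reduction modulo 4 of the vector stored in `w`. -/
def bvec (w : W) (j : Fin 24) : ZMod 4 := rho (w.vec j)

theorem par_bvec (w : W) : par (bvec w) = bits w.p0 := by
  rw [← par_vec]
  have h : ∀ x : ZMod 16, (rho x).val.testBit 0 = x.val.testBit 0 := by decide
  funext j
  exact h _

theorem par_shift (c d : Fin 24 → ZMod 16) : par (c + (2 : ZMod 16) • d) = par c := by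
  have h : ∀ x y : ZMod 16, (x + 2 * y).val.testBit 0 = x.val.testBit 0 := by decide
  funext j
  exact h _ _

theorem lift_p0 (a s : W) : (a.add s.dbl).p0 = a.p0 := by
  change a.p0 ^^^ 0 = a.p0
  simp

theorem lift_p1 (a s : W) : (a.add s.dbl).p1 = a.p1 ^^^ s.p0 := by
  change (a.p1 ^^^ s.p0) ^^^ (a.p0 &&& 0) = _
  simp

theorem bits_eq_zero {n : ℕ} (hn : n < 2 ^ 24) : (bits n = fun _ => false) ↔ n = 0 := by
  constructor
  · intro h
    exact bits_inj hn (by norm_num) (h.trans (by funext j; simp [bits]))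
  · rintro rfl
    funext j; simp [bits]

theorem words_lt : ∀ w ∈ words.toList, w.p0 < 2 ^ 24 := by
  have h : words.all (fun w => Nat.blt w.p0 16777216) = true := by decide +kernel
  intro w hw
  have := Tr.all_mem h w hw
  exact Nat.ble_eq.mp this

/-- The dual vectors are the reductions modulo 4 of the sums `v + 2 u` of listed words. -/
theorem ff_eq (c : Fin 24 → ZMod 16) : ff c = LS words.toList fun v =>
    if v.p0 = 0 then 0 else LS words.toList fun u => T c (bvec (v.add u.dbl)) := by
  rw [ff, sum_Dual, sum_digits4]
  have h1 : ∀ m s : Fin 12 → Bool, enc4 (fun i => rho (b16 (m i) + 2 * b16 (s i))) =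
      fun j => rho ((enc (fun i => b16 (m i)) + (2 : ZMod 16) • enc (fun i => b16 (s i))) j) := by
    intro m s
    rw [← map_smul, ← map_add]
    funext j
    rw [rho_enc]
    rfl
  simp only [h1]
  have h2 : ∀ m : Fin 12 → Bool, _ = _ := fun m => sum_words fun d =>
    if par (fun j => rho ((enc (fun i => b16 (m i)) + (2 : ZMod 16) • d) j)) = (fun _ => false) then 0
      else T c (fun j => rho ((enc (fun i => b16 (m i)) + (2 : ZMod 16) • d) j))
  simp only [h2]
  refine (sum_words fun e => LS words.toList fun w =>
    if par (fun j => rho ((e + (2 : ZMod 16) • w.vec) j)) = (fun _ => false) then 0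
      else T c (fun j => rho ((e + (2 : ZMod 16) • w.vec) j))).trans ?_
  refine LS_congr fun v hv => ?_
  simp only [← vec_lift]
  have h3 : ∀ u : W, par (fun j => rho ((v.add u.dbl).vec j)) = bits v.p0 := fun u => by
    rw [← lift_p0 v u]; exact par_bvec _
  simp only [h3, bits_eq_zero (words_lt v hv)]
  split_ifs
  · exact LS_zero _
  · rfl

/-- For dual `b` the term `T c b` depends on `c` only modulo `4 * Code`. -/
theorem ff_shift (c d : Fin 24 → ZMod 16) (hd : d ∈ Code) : ff (c + (4 : ZMod 16) • d) = ff c := by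
  rw [ff, ff]
  refine Finset.sum_congr rfl fun b _ => ?_
  by_cases hb : Dual b
  · simp only [T_shift, hb d hd, chi_zero, C_1, one_mul]
  · simp [hb]

/-- A sum over the code, as a sum over the cosets of `4 * Code`; these have `4^12` elements and
are represented by the words `a + 2 s`. -/
theorem sum_Code_eq (p : (Fin 24 → Bool) → Prop) [DecidablePred p] :
    (∑ c, if c ∈ Code then (if p (par c) then ff c else 0) else 0) =
      2 ^ 24 * LS words.toList fun a => if p (bits a.p0) then
        LS words.toList fun s => ff (a.add s.dbl).vec else 0 := by
  rw [sum_Code, sum_digits16]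
  have h1 : ∀ (m s : Fin 12 → Bool) (u : Fin 12 → ZMod 4),
      enc (fun i => b16 (m i) + 2 * b16 (s i) + 4 * ((u i).val : ZMod 16)) =
      (enc (fun i => b16 (m i)) + (2 : ZMod 16) • enc (fun i => b16 (s i)))
        + (4 : ZMod 16) • enc (fun i => ((u i).val : ZMod 16)) := by
    intro m s u
    rw [← map_smul, ← map_smul, ← map_add, ← map_add]
    rfl
  have hp4 : ∀ c d : Fin 24 → ZMod 16, par (c + (4 : ZMod 16) • d) = par c := by
    intro c d
    rw [show (4 : ZMod 16) • d = (2 : ZMod 16) • ((2 : ZMod 16) • d) by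
      rw [smul_smul]; congr 1, par_shift]
  simp only [h1, ff_shift _ _ (show enc _ ∈ Code from ⟨_, rfl⟩), hp4, par_shift]
  simp only [Finset.sum_const, Finset.card_univ, Fintype.card_fun, ZMod.card, Fintype.card_fin,
    nsmul_eq_mul]
  rw [show (((4 ^ 12 : ℕ) : R)) = 2 ^ 24 by norm_num]
  simp only [← Finset.mul_sum]
  refine congrArg ((2 : R) ^ 24 * ·) ?_
  have h2 : ∀ m : Fin 12 → Bool, _ = _ := fun m => sum_words fun d =>
    if p (par (enc fun i => b16 (m i))) then ff (enc (fun i => b16 (m i)) + (2 : ZMod 16) • d) else 0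
  simp only [h2]
  refine (sum_words fun e => LS words.toList fun w =>
    if p (par e) then ff (e + (2 : ZMod 16) • w.vec) else 0).trans ?_
  refine LS_congr fun a ha => ?_
  simp only [← vec_lift, par_vec]
  split_ifs
  · rfl
  · exact LS_zero _

/-! ### The monomial of a pair of codewords -/

/-- The monomial `i^k x_0^{a0} x_1^{a1} y_0^{b0} y_1^{b1} z^e`. -/
def monoOf (k a0 a1 b0 b1 e : ℕ) : R :=
  C (Complex.I ^ k) * X 0 ^ a0 * X 1 ^ a1 * X 2 ^ b0 * X 3 ^ b1 * X 4 ^ e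

/-- The monomial encoded by a key. -/
def F (k : ℕ) : R :=
  monoOf (k % 4) (k / 4 % 32) (k / 128 % 32) (k / 4096 % 32) (k / 131072 % 32)
    (24 - (k / 4 % 32 + k / 128 % 32 + k / 4096 % 32 + k / 131072 % 32))

/-- The contribution of one coordinate, in terms of binary digits. It vanishes exactly when
neither argument is 0 modulo 4. -/
theorem theta_bits (a0 a1 a2 a3 b0 b1 b2 b3 : Bool) :
    theta (num a0 a1 a2 a3) (rho (num b0 b1 b2 b3)) =
      if (a0 || a1) && (b0 || b1) then 0 else
        monoOf ((a2 && b0).toNat + 2 * ((a3 && b0).toNat + (a2 && b1).toNat)) a0.toNat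
          (a1 ^^ (a1 && a0)).toNat b0.toNat (b1 ^^ (b1 && b0)).toNat
          (!(a0 || a1 || b0 || b1)).toNat := by
  have hr : ∀ a0 a1 a2 a3 : Bool, rho (num a0 a1 a2 a3) = 0 ↔ (a0 || a1) = false := by decide
  have h2 : ∀ a0 a1 a2 a3 : Bool, rho (num a0 a1 a2 a3) = 2 ↔ (a0 = false ∧ a1 = true) := by decide
  have ho : ∀ a0 a1 a2 a3 : Bool, (num a0 a1 a2 a3).val % 2 = 1 ↔ a0 = true := by decide
  have hq : ∀ a2 a3 b0 b1 b2 b3 : Bool,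
      (rho (num b0 b1 b2 b3) * quarter (num false false a2 a3)).val =
      ((a2 && b0).toNat + 2 * ((a3 && b0).toNat + (a2 && b1).toNat)) % 4 := by decide +kernel
  unfold theta yv
  simp only [hr, h2, ho]
  by_cases ha : (a0 || a1) = false
  · obtain ⟨rfl, rfl⟩ : a0 = false ∧ a1 = false := by simpa using ha
    rw [if_pos ha, chi, hq, ← pow_eq_pow_mod _ Complex.I_pow_four]
    generalize (a2 && b0).toNat + 2 * ((a3 && b0).toNat + (a2 && b1).toNat) = k
    cases b0 <;> cases b1 <;> simp [monoOf]
  · rw [if_neg ha]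
    have ha' : (a0 || a1) = true := Bool.eq_true_of_not_eq_false ha
    by_cases hb : (b0 || b1) = false
    · obtain ⟨rfl, rfl⟩ : b0 = false ∧ b1 = false := by simpa using hb
      cases a0 <;> cases a1 <;> simp_all [monoOf]
    · rw [if_neg hb, ha', Bool.eq_true_of_not_eq_false hb]
      rfl

theorem monoOf_prod (k a0 a1 b0 b1 e : Fin 24 → ℕ) :
    ∏ j, monoOf (k j) (a0 j) (a1 j) (b0 j) (b1 j) (e j) =
      monoOf (∑ j, k j) (∑ j, a0 j) (∑ j, a1 j) (∑ j, b0 j) (∑ j, b1 j) (∑ j, e j) := by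
  simp only [monoOf, Finset.prod_mul_distrib, Finset.prod_pow_eq_pow_sum, ← map_prod]

theorem pc_le (n : ℕ) : pc n ≤ 24 := by
  rw [pc_eq]
  calc _ ≤ ∑ _j : Fin 24, 1 := Finset.sum_le_sum fun j _ => Bool.toNat_le _
    _ = 24 := by simp

theorem F_pack (k a0 a1 b0 b1 : ℕ) (h0 : a0 ≤ 24) (h1 : a1 ≤ 24) (h2 : b0 ≤ 24)
    (h3 : b1 ≤ 24) :
    F (k % 4 + 4 * (a0 + 32 * (a1 + 32 * (b0 + 32 * b1)))) =
      monoOf k a0 a1 b0 b1 (24 - (a0 + a1 + b0 + b1)) := by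
  have hk : k % 4 < 4 := Nat.mod_lt _ (by norm_num)
  have hI : Complex.I ^ k = Complex.I ^ (k % 4) := pow_eq_pow_mod _ Complex.I_pow_four
  rw [monoOf, hI]
  generalize k % 4 = k' at *
  rw [F, monoOf,
    show (k' + 4 * (a0 + 32 * (a1 + 32 * (b0 + 32 * b1)))) % 4 = k' by omega,
    show (k' + 4 * (a0 + 32 * (a1 + 32 * (b0 + 32 * b1)))) / 4 % 32 = a0 by omega,
    show (k' + 4 * (a0 + 32 * (a1 + 32 * (b0 + 32 * b1)))) / 128 % 32 = a1 by omega,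
    show (k' + 4 * (a0 + 32 * (a1 + 32 * (b0 + 32 * b1)))) / 4096 % 32 = b0 by omega,
    show (k' + 4 * (a0 + 32 * (a1 + 32 * (b0 + 32 * b1)))) / 131072 % 32 = b1 by omega]

theorem and_bit_false {m n : ℕ} (h : m &&& n = 0) (j : ℕ) :
    (m.testBit j && n.testBit j) = false := by
  rw [← Nat.testBit_and, h, Nat.zero_testBit]

theorem T_of_disj {A B : W} (h00 : A.p0 &&& B.p0 = 0) (h10 : A.p1 &&& B.p0 = 0)
    (h01 : A.p0 &&& B.p1 = 0) (h11 : A.p1 &&& B.p1 = 0) : T A.vec (bvec B) = F (key A B) := by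
  have hd : ∀ j : Fin 24, ((A.p0.testBit j || A.p1.testBit j) &&
      (B.p0.testBit j || B.p1.testBit j)) = false := by
    intro j
    have e1 := and_bit_false h00 j
    have e2 := and_bit_false h10 j
    have e3 := and_bit_false h01 j
    have e4 := and_bit_false h11 j
    revert e1 e2 e3 e4
    generalize A.p0.testBit j = a; generalize A.p1.testBit j = b
    generalize B.p0.testBit j = c; generalize B.p1.testBit j = d
    revert a b c d; decide
  have h1 : T A.vec (bvec B) = ∏ j : Fin 24, monoOf _ _ _ _ _ _ :=
    Finset.prod_congr rfl fun j _ => (theta_bits _ _ _ _ _ _ _ _).trans (if_neg (by rw [hd]; simp))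
  rw [h1, monoOf_prod]
  simp only [key]
  rw [F_pack _ _ _ _ _ (pc_le _) (pc_le _) (pc_le _) (pc_le _)]
  change _ = monoOf (pc (A.p2 &&& B.p0) + 2 * (pc (A.p3 &&& B.p0) + pc (A.p2 &&& B.p1))) (pc A.p0)
    (pc (A.p1 ^^^ (A.p1 &&& A.p0))) (pc B.p0) (pc (B.p1 ^^^ (B.p1 &&& B.p0)))
    (24 - (pc A.p0 + pc (A.p1 ^^^ (A.p1 &&& A.p0)) + pc B.p0 + pc (B.p1 ^^^ (B.p1 &&& B.p0))))
  have h24 : (∑ j : Fin 24, (!(A.p0.testBit j || A.p1.testBit j || B.p0.testBit j ||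
        B.p1.testBit j)).toNat) +
      (pc A.p0 + pc (A.p1 ^^^ (A.p1 &&& A.p0)) + pc B.p0 + pc (B.p1 ^^^ (B.p1 &&& B.p0))) = 24 := by
    simp only [pc_eq, ← Finset.sum_add_distrib, bits, Nat.testBit_xor, Nat.testBit_and]
    calc _ = ∑ _j : Fin 24, 1 := Finset.sum_congr rfl fun j _ => by
            have := hd j
            revert this
            generalize A.p0.testBit j = a; generalize A.p1.testBit j = b
            generalize B.p0.testBit j = c; generalize B.p1.testBit j = d
            revert a b c d; decide
      _ = 24 := by simp
  rw [← Nat.eq_sub_of_add_eq h24]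
  simp only [pc_eq, Finset.sum_add_distrib, ← Finset.mul_sum, bits, Nat.testBit_xor,
    Nat.testBit_and]

/-- If the supports modulo 4 of the two vectors meet then the term vanishes. -/
theorem T_eq_zero {A B : W} {m n : ℕ} (hm : m = A.p0 ∨ m = A.p1) (hn : n = B.p0 ∨ n = B.p1)
    (hlt : n < 2 ^ 24) (h : m &&& n ≠ 0) : T A.vec (bvec B) = 0 := by
  obtain ⟨j, hj⟩ := Nat.exists_testBit_of_ne_zero h
  rw [Nat.testBit_and, Bool.and_eq_true] at hj
  have hj24 : j < 24 := by
    by_contra hc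
    have := Nat.testBit_lt_two_pow (lt_of_lt_of_le hlt
      (Nat.pow_le_pow_right (by norm_num) (not_lt.mp hc)))
    rw [this] at hj
    exact absurd hj.2 (by simp)
  refine Finset.prod_eq_zero (Finset.mem_univ (⟨j, hj24⟩ : Fin 24)) ?_
  refine (theta_bits _ _ _ _ _ _ _ _).trans (if_pos ?_)
  rcases hm with rfl | rfl <;> rcases hn with rfl | rfl <;> simp [hj.1, hj.2]

/-! ### The enumeration of nonzero terms -/

theorem LS_boolRec {α : Type} (b : Bool) (l l' : List α) (f : α → R) :
    LS (Bool.rec l l' b) f = if b = true then LS l' f else LS l f := by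
  cases b <;> rfl

theorem LS_nil {α : Type} (f : α → R) : LS [] f = 0 := rfl

theorem LS_single {α : Type} (a : α) (f : α → R) : LS [a] f = f a := by simp [LS]

theorem LS_lifts (L : Tr) (a : W) (v : ℕ) (g : W → R) : LS (lifts L a v) g =
    LS L.toList fun s => if (a.p1 ^^^ s.p0) &&& v = 0 then g (a.add s.dbl) else 0 := by
  rw [lifts, Tr.fm_eq, LS_flatMap]
  simp only [LS_boolRec, LS_nil, LS_single, disj_iff]
  rfl

theorem LS_pairs (As Bs : List W) (g : ℕ → R) : LS (pairs As Bs) g =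
    LS As fun A => LS Bs fun B => if A.p1 &&& B.p1 = 0 then g (key A B) else 0 := by
  rw [pairs, LS_flatMap]
  simp only [LS_flatMap, LS_boolRec, LS_nil, LS_single, disj_iff]

theorem words_p1_lt : ∀ w ∈ words.toList, w.p1 < 2 ^ 24 := by
  have h : words.all (fun w => Nat.blt w.p1 16777216) = true := by decide +kernel
  intro w hw
  have := Tr.all_mem h w hw
  exact Nat.ble_eq.mp this

/-- The enumeration `keys` leaves out only terms that vanish. -/
theorem LS_keys (n : ℕ) : LS (keys words n) F = LS words.toList fun a => if a.p0 = n then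
    LS words.toList fun s => ff (a.add s.dbl).vec else 0 := by
  rw [keys, Tr.fm_eq, LS_flatMap]
  refine LS_congr fun a ha => ?_
  rw [LS_boolRec, LS_nil]
  simp only [Nat.beq_eq]
  refine if_congr Iff.rfl ?_ rfl
  simp only [ff_eq]
  rw [LS_comm, Tr.fm_eq, LS_flatMap]
  refine LS_congr fun v hv => ?_
  rw [LS_boolRec, LS_boolRec, LS_nil]
  simp only [Nat.beq_eq, disj_iff]
  by_cases hv0 : v.p0 = 0
  · simp only [hv0, if_true, LS_zero, ite_self]
  simp only [hv0, if_false]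
  have hB : ∀ u ∈ words.toList, (v.add u.dbl).p1 < 2 ^ 24 := fun u hu => by
    rw [lift_p1]; exact Nat.xor_lt_two_pow (words_p1_lt v hv) (words_lt u hu)
  by_cases hav : a.p0 &&& v.p0 = 0
  · rw [if_pos hav, LS_pairs, LS_lifts]
    refine LS_congr fun s hs => ?_
    split_ifs with h1
    · rw [LS_lifts]
      refine LS_congr fun u hu => ?_
      by_cases h2 : (v.p1 ^^^ u.p0) &&& a.p0 = 0
      · rw [if_pos h2]
        by_cases h3 : (a.add s.dbl).p1 &&& (v.add u.dbl).p1 = 0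
        · rw [if_pos h3, T_of_disj]
          · rwa [lift_p0, lift_p0]
          · rwa [lift_p0, lift_p1]
          · rwa [lift_p0, lift_p1, Nat.land_comm]
          · exact h3
        · rw [if_neg h3, T_eq_zero (Or.inr rfl) (Or.inr rfl) (hB u hu) h3]
      · rw [if_neg h2, T_eq_zero (Or.inl rfl) (Or.inr rfl) (hB u hu)]
        rwa [lift_p0, lift_p1, Nat.land_comm]
    · symm
      rw [← LS_zero words.toList]
      refine LS_congr fun u hu => ?_
      refine T_eq_zero (Or.inr rfl) (Or.inl rfl) (by rw [lift_p0]; exact words_lt v hv) ?_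
      rwa [lift_p0, lift_p1]
  · rw [if_neg hav]
    symm
    rw [← LS_zero words.toList]
    refine LS_congr fun s hs => ?_
    rw [← LS_zero words.toList]
    refine LS_congr fun u hu => ?_
    refine T_eq_zero (Or.inl rfl) (Or.inl rfl) (by rw [lift_p0]; exact words_lt v hv) ?_
    rwa [lift_p0, lift_p0]

theorem Psi_eq_keys {n : ℕ} (hn : n < 2 ^ 24) : Psi (bits n) = 2 ^ 24 * LS (keys words n) F := by
  rw [Psi, sum_Code_eq fun w => w = bits n, LS_keys]
  refine congrArg ((2 : R) ^ 24 * ·) (LS_congr fun a ha => ?_)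
  have : bits a.p0 = bits n ↔ a.p0 = n := ⟨bits_inj (words_lt a ha) hn, fun h => by rw [h]⟩
  simp only [this]

/-! ### Orbits of Golay words -/

theorem testBit_permN (l : List ℕ) (n j : ℕ) (hj : j < l.length) :
    (permN l n).testBit j = n.testBit (l.getD j 0) := by
  induction l generalizing j with
  | nil => simp at hj
  | cons s l ih =>
    change (2 * permN l n + n >>> s % 2).testBit j = _
    cases j with
    | zero =>
      simp only [Nat.testBit_zero, List.getD_cons_zero]
      rw [Nat.testBit_eq_decide_div_mod_eq, Nat.shiftRight_eq_div_pow]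
      congr 2
      omega
    | succ j =>
      rw [Nat.testBit_succ, List.getD_cons_succ, ← ih j (by simpa using hj)]
      congr 1
      omega

theorem permN_lt (l : List ℕ) (n : ℕ) : permN l n < 2 ^ l.length := by
  induction l with
  | nil => simp [permN]
  | cons s l ih =>
    change 2 * permN l n + n >>> s % 2 < 2 ^ (l.length + 1)
    rw [pow_succ]
    omega

theorem bits_mu (n : ℕ) : bits (permN mu n) = bits n ∘ dblp := by
  have h : ∀ j : Fin 24, mu.getD j 0 = (dblp j : ℕ) := by decide
  funext j
  rw [bits, testBit_permN _ _ _ (by exact j.2), h]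
  rfl

theorem rot_eq (n : ℕ) :
    rot n = ((n % 2 ^ 23) >>> 1 ||| (n % 2 ^ 1) <<< 22) ||| (n >>> 23) <<< 23 := rfl

theorem bits_rot (n : ℕ) : bits (rot n) = bits n ∘ sigma := by
  have h : ∀ j : Fin 24, (sigma j : ℕ) =
      if (j : ℕ) < 22 then (j : ℕ) + 1 else if (j : ℕ) = 22 then 0 else 23 := by
    decide
  funext j
  change (rot n).testBit j = n.testBit (sigma j)
  rw [h, rot_eq]
  simp only [Nat.testBit_or, Nat.testBit_shiftRight, Nat.testBit_shiftLeft,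
    Nat.testBit_mod_two_pow]
  obtain ⟨j, hj⟩ := j
  dsimp only
  rcases lt_trichotomy j 22 with h1 | h1 | h1
  · rw [if_pos h1]
    have a1 : j + 1 < 23 := by omega
    have a2 : ¬ j ≥ 22 := by omega
    have a3 : ¬ j ≥ 23 := by omega
    rw [add_comm 1 j]
    simp only [a1, a2, a3, decide_true, decide_false, Bool.true_and, Bool.false_and, Bool.or_false]
  · subst h1; simp
  · have : j = 23 := by omega
    subst this; simp

theorem rot_lt {n : ℕ} (hn : n < 2 ^ 24) : rot n < 2 ^ 24 := by
  rw [rot_eq]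
  refine Nat.or_lt_two_pow (Nat.or_lt_two_pow ?_ ?_) ?_
  · rw [Nat.shiftRight_eq_div_pow]; omega
  · rw [Nat.shiftLeft_eq]; omega
  · rw [Nat.shiftRight_eq_div_pow, Nat.shiftLeft_eq]; omega

theorem pc_bits {m n : ℕ} {π : Equiv.Perm (Fin 24)} (h : bits m = bits n ∘ π) : pc m = pc n := by
  rw [pc_eq, pc_eq, h]
  exact Equiv.sum_comp π fun j => (bits n j).toNat

theorem srch1_sound {Q : ℕ → Prop} (hrot : ∀ m, Q m → Q (rot m)) {n : ℕ} :
    ∀ {f m : ℕ}, srch1 f m n = true → Q m → ∃ m', Q m' ∧ m' ≠ 0 ∧ m' < n := by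
  intro f
  induction f with
  | zero => intro m h; simp [srch1] at h
  | succ f ih =>
    intro m h hm
    rw [srch1, Bool.or_eq_true, Bool.and_eq_true] at h
    rcases h with ⟨h1, h2⟩ | h
    · exact ⟨m, hm, Nat.one_le_iff_ne_zero.1 (Nat.ble_eq.mp h1), Nat.ble_eq.mp h2⟩
    · exact ih h (hrot m hm)

/-- A successful search yields a smaller nonzero number with every property preserved by rotations
and multipliers. -/
theorem srch_sound {Q : ℕ → Prop} (hrot : ∀ m, Q m → Q (rot m)) (hmu : ∀ m, Q m → Q (permN mu m))
    {n : ℕ} : ∀ {f m : ℕ}, srch f m n = true → Q m → ∃ m', Q m' ∧ m' ≠ 0 ∧ m' < n := by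
  intro f
  induction f with
  | zero => intro m h; simp [srch] at h
  | succ f ih =>
    intro m h hm
    rw [srch, Bool.or_eq_true] at h
    rcases h with h | h
    · exact srch1_sound hrot h hm
    · exact ih h (hmu m hm)

theorem elem_mem {n : ℕ} {l : List ℕ} (h : elem n l = true) : n ∈ l := by
  rw [elem, List.any_eq_true] at h
  obtain ⟨x, hx, hn⟩ := h
  rw [Nat.beq_eq] at hn
  rwa [hn]

theorem subs_mem (D : Submodule (ZMod 16) (Fin 24 → ZMod 16)) (L : List W)
    (h : ∀ r ∈ L, r.vec ∈ D) : ∀ w ∈ (subs L).toList, w.vec ∈ D := by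
  induction L with
  | nil =>
    intro w hw
    simp only [subs, Tr.toList, List.mem_singleton] at hw
    rw [hw, vec_zero]; exact D.zero_mem
  | cons r L ih =>
    intro w hw
    rw [subs, Tr.toList, List.mem_append, Tr.toList_map, List.mem_map] at hw
    have ih' := ih fun r hr => h r (List.mem_cons_of_mem _ hr)
    rcases hw with hw | ⟨w', hw', rfl⟩
    · exact ih' w hw
    · rw [vec_add]; exact D.add_mem (h r List.mem_cons_self) (ih' w' hw')

theorem words_mem {w : W} (hw : w ∈ words.toList) : w.vec ∈ Code := by
  refine subs_mem Code rows (fun r hr => ?_) w hw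
  obtain ⟨i, rfl⟩ := List.mem_iff_get.1 hr
  exact row_mem i

theorem exists_subs (L : List W) (m : Fin L.length → Bool) :
    ∃ w ∈ (subs L).toList, w.vec = ∑ i, b16 (m i) • (L.get i).vec := by
  induction L with
  | nil => exact ⟨_, List.mem_singleton.2 rfl, by simp [vec_zero]⟩
  | cons r L ih =>
    obtain ⟨w, hw, hv⟩ := ih fun i => m i.succ
    have hs : ∑ i, b16 (m i) • ((r :: L).get i).vec =
        b16 (m 0) • r.vec + ∑ i : Fin L.length, b16 (m i.succ) • (L.get i).vec :=
      Fin.sum_univ_succ _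
    rw [hs, ← hv, subs, Tr.toList, Tr.toList_map]
    cases h : m 0 with
    | false => exact ⟨w, List.mem_append_left _ hw, by simp [b16]⟩
    | true =>
      exact ⟨r.add w, List.mem_append_right _ (List.mem_map_of_mem hw), by rw [vec_add]; simp [b16]⟩

/-- Every codeword is congruent modulo 2 to one of the listed words. -/
theorem exists_word {n : ℕ} (hn : n < 2 ^ 24) {c : Fin 24 → ZMod 16} (hc : c ∈ Code)
    (h : par c = bits n) : ∃ a ∈ words.toList, a.p0 = n := by
  obtain ⟨t, rfl⟩ := hc
  obtain ⟨a, ha, hv⟩ := exists_subs rows fun i => (digits16.symm (t i)).1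
  refine ⟨a, ha, bits_inj (words_lt a ha) hn ?_⟩
  rw [← par_vec, ← h, hv]
  have ht : enc t = enc (fun i => b16 (digits16.symm (t i)).1) + (2 : ZMod 16) •
      enc (fun i => b16 (digits16.symm (t i)).2.1 + 2 * ((digits16.symm (t i)).2.2.val : ZMod 16)) := by
    rw [← map_smul, ← map_add]
    congr 1
    funext i
    conv_lhs => rw [← digits16.apply_symm_apply (t i)]
    simp only [digits16, Equiv.ofBijective_apply, Pi.add_apply, Pi.smul_apply, smul_eq_mul]
    ring
  rw [ht, par_shift]
  congr 1

/-! ### Evaluation on orbit representatives -/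

/-- The contribution of one word of weight 8, up to the factor `2^24`. -/
def octadTerm : R := 64 * (X 0 ^ 8 * X 2 ^ 8 * (-(X 1 ^ 2 * X 3 ^ 2 * X 4 ^ 4) +
  X 1 ^ 4 * X 3 ^ 2 * X 4 ^ 2 + X 1 ^ 2 * X 3 ^ 4 * X 4 ^ 2 + X 1 ^ 4 * X 3 ^ 4))

/-- The keys that occur for a word of weight 8, with multiplicities. -/
def table : List (ℕ × ℕ) := [(557346, 64), (295200, 64), (295458, 64), (557600, 64), (819489, 16),
  (819491, 16), (295713, 16), (295715, 16), (295202, 128), (557344, 128), (295201, 144),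
  (557347, 96), (295203, 144), (557345, 96), (295457, 96), (295459, 96), (295456, 128)]

theorem LS_filter (l : List ℕ) (k : ℕ) (f : ℕ → R) :
    LS l f = (l.count k : R) * f k + LS (l.filter fun x => !(Nat.beq x k)) f := by
  induction l with
  | nil => simp [LS]
  | cons a l ih =>
    rw [LS_cons, ih]
    by_cases h : a = k
    · subst h
      have : Nat.beq a a = true := Nat.beq_refl a
      rw [List.filter_cons, List.count_cons_self, this]
      simp only [Bool.not_true, Bool.false_eq_true, if_false]
      push_cast
      ring
    · have hb : Nat.beq a k = false := by rw [← Bool.not_eq_true, Nat.beq_eq]; exact h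
      rw [List.filter_cons, hb, List.count_cons_of_ne h]
      simp only [Bool.not_false, if_true, LS_cons]
      ring

/-- A list sum can be computed from a table of multiplicities. -/
theorem LS_of_hist (f : ℕ → R) : ∀ (t : List (ℕ × ℕ)) (l : List ℕ), hist t l = true →
    LS l f = LS t fun x => (x.2 : R) * f x.1
  | [], l, h => by
    rw [hist, List.isEmpty_iff] at h
    rw [h]; rfl
  | (k, n) :: t, l, h => by
    rw [hist, Bool.and_eq_true, Nat.beq_eq] at h
    rw [LS_filter l k, LS_cons, LS_of_hist f t _ h.2, h.1]

theorem table_sum : LS table (fun x => (x.2 : R) * F x.1) = octadTerm := by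
  have h2 : (C (Complex.I ^ 2) : R) = -1 := by rw [Complex.I_sq]; simp
  have h3 : (C (Complex.I ^ 3) : R) = -C Complex.I := by rw [Complex.I_pow_three]; simp
  simp only [table, LS_cons, LS_nil, F, monoOf, octadTerm]
  norm_num only [h2, h3, pow_zero, pow_one, C_1]
  ring

theorem keys_octad : ∀ n ∈ reps8, LS (keys words n) F = octadTerm := by
  have h : reps8.all (fun n => hist table (keys words n)) = true := by decide +kernel
  intro n hn
  rw [LS_of_hist F table _ (List.all_eq_true.1 h n hn), table_sum]

theorem keys_other : ∀ n ∈ repsN, LS (keys words n) F = 0 := by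
  have h : repsN.all (fun n => (keys words n).isEmpty) = true := by decide +kernel
  intro n hn
  have := List.all_eq_true.1 h n hn
  rw [List.isEmpty_iff] at this
  rw [this, LS_nil]

/-- Every nonzero Golay word is a listed representative or has a smaller nonzero image. -/
theorem orbit_check : words.all (fun a => Nat.beq a.p0 0 || srch 11 a.p0 a.p0 ||
    elem a.p0 reps8 || elem a.p0 repsN) = true := by decide +kernel

/-- By descent along the orbits, the contribution of a nonzero Golay word depends only on whether
its weight is 8. -/
theorem Psi_value (n : ℕ) (hn : n < 2 ^ 24) (h0 : n ≠ 0) (hw : ∃ c ∈ Code, par c = bits n) :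
    Psi (bits n) = if pc n = 8 then 2 ^ 24 * octadTerm else 0 := by
  induction n using Nat.strong_induction_on with
  | _ n ih =>
    obtain ⟨c, hc, hp⟩ := hw
    obtain ⟨a, ha, rfl⟩ := exists_word hn hc hp
    have hcheck := Tr.all_mem orbit_check a ha
    simp only [Bool.or_eq_true, Nat.beq_eq] at hcheck
    rcases hcheck with ((h | h) | h) | h
    · exact absurd h h0
    · let Q : ℕ → Prop := fun m => m < 2 ^ 24 ∧ (∃ c ∈ Code, par c = bits m) ∧
        Psi (bits m) = Psi (bits a.p0) ∧ pc m = pc a.p0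
      have hstep : ∀ {π : Equiv.Perm (Fin 24)}, IsAut π → ∀ m m', m' < 2 ^ 24 →
          bits m' = bits m ∘ π → Q m → Q m' := by
        rintro π hπ m m' hlt hb ⟨-, ⟨d, hd, hdp⟩, hP, hpc⟩
        refine ⟨hlt, ⟨d ∘ π, (hπ d).2 hd, ?_⟩, ?_, ?_⟩
        · rw [par_comp, hdp, hb]
        · rw [hb, Psi_comp hπ, hP]
        · rw [pc_bits hb, hpc]
      obtain ⟨m', ⟨h1, h2, h3, h4⟩, h5, h6⟩ := srch_sound (Q := Q)
        (fun m hm => hstep sigma_aut m _ (rot_lt hm.1) (bits_rot m) hm)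
        (fun m hm => hstep dblp_aut m _ (permN_lt mu m) (bits_mu m) hm) h
        ⟨hn, ⟨c, hc, hp⟩, rfl, rfl⟩
      rw [← h3, ← h4]
      exact ih m' h6 h1 h5 h2
    · have h := elem_mem h
      have h8 : ∀ n ∈ reps8, pc n = 8 := by decide +kernel
      rw [Psi_eq_keys hn, keys_octad _ h, if_pos (h8 _ h)]
    · have h := elem_mem h
      have h8 : ∀ n ∈ repsN, pc n ≠ 8 := by decide +kernel
      rw [Psi_eq_keys hn, keys_other _ h, if_neg (h8 _ h), mul_zero]

/-! ### Summation over the Golay code -/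

/-- The contribution of a Golay word, with the unique lift by coefficients 0 and 1 singled out. -/
theorem Psi_enc (m : Fin 12 → Bool) : Psi (par (enc fun i => b16 (m i))) =
    2 ^ 24 * LS words.toList fun s => ff ((enc fun i => b16 (m i)) + (2 : ZMod 16) • s.vec) := by
  rw [Psi, sum_Code_eq fun w => w = par (enc fun i => b16 (m i))]
  refine congrArg ((2 : R) ^ 24 * ·) ?_
  simp only [vec_lift, ← par_vec]
  rw [← sum_words fun e => if par e = par (enc fun i => b16 (m i)) then
    LS words.toList fun s => ff (e + (2 : ZMod 16) • s.vec) else 0]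
  have hinj : ∀ m' : Fin 12 → Bool,
      par (enc fun i => b16 (m' i)) = par (enc fun i => b16 (m i)) ↔ m' = m := by
    intro m'
    refine ⟨fun h => ?_, fun h => by rw [h]⟩
    funext i
    have h1 := congrFun h (info i)
    simp only [par, enc_info] at h1
    revert h1
    generalize m' i = x
    generalize m i = y
    revert x y
    decide
  simp only [hinj]
  rw [Finset.sum_ite_eq', if_pos (Finset.mem_univ m)]

/-- The number of leaves satisfying `p`. -/
def Tr.cnt (p : W → Bool) (t : Tr) : ℕ :=
  Tr.rec (fun w => Bool.rec 0 1 (p w)) (fun _ _ x y => Nat.add x y) t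

theorem LS_cnt (p : W → Bool) (x : R) (t : Tr) :
    (LS t.toList fun w => if p w = true then x else 0) = (t.cnt p : R) * x := by
  induction t with
  | leaf w =>
    rw [Tr.toList, LS_single]
    have : (Tr.leaf w).cnt p = Bool.rec 0 1 (p w) := rfl
    rw [this]
    cases p w <;> simp
  | node l r hl hr =>
    rw [Tr.toList, LS_append, hl, hr]
    have : (Tr.node l r).cnt p = l.cnt p + r.cnt p := rfl
    rw [this]
    push_cast
    ring

/-- The binary Golay code has 759 words of weight 8. -/
theorem octad_count : words.cnt (fun w => Nat.beq (pc w.p0) 8) = 759 := by decide +kernel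

theorem proj_value : proj (∑ c, if c ∈ Code then ∏ j, wt (c j) else 0) =
    759 * (2 ^ 24 * octadTerm) := by
  rw [proj_fourier]
  have h1 := sum_Code_eq fun w => ¬ w = fun _ => false
  simp only [ite_not] at h1
  rw [h1, ← LS_mul]
  simp only [vec_lift, ← par_vec]
  rw [← sum_words fun e => (2 : R) ^ 24 * if par e = (fun _ => false) then 0 else
    LS words.toList fun s => ff (e + (2 : ZMod 16) • s.vec)]
  simp only [mul_ite, mul_zero, ← Psi_enc]
  rw [sum_words fun e => if par e = (fun _ => false) then 0 else Psi (par e)]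
  have h2 := LS_cnt (fun w => Nat.beq (pc w.p0) 8) (2 ^ 24 * octadTerm) words
  rw [octad_count] at h2
  push_cast at h2
  rw [← h2]
  refine LS_congr fun a ha => ?_
  have hlt := words_lt a ha
  simp only [par_vec, bits_eq_zero hlt, Nat.beq_eq]
  by_cases h0 : a.p0 = 0
  · have : pc 0 ≠ 8 := by decide
    rw [if_pos h0, h0, if_neg this]
  · rw [if_neg h0, Psi_value _ hlt h0 ⟨_, words_mem ha, par_vec a⟩]

end QR24

/-- The partial weight enumerator `D_{2,2}` for the binary lifted QR codes of length 24. -/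
theorem stmt_7 (g : Polynomial (ZMod 2)) (hg : IsQRFactor 2 g)
    (g4 : Polynomial (ZMod 16)) (C4 : Submodule (ZMod 16) (Fin 24 → ZMod 16))
    (hC4 : IsLiftedQR (by norm_num : (2:ℕ) ∣ 16) g g4 C4) :
    divPart (((2:ℚ) ^ 24)⁻¹ •
        aeval (![X 0, X 1, X 4 - X 3, X 4 + X 3 - 2 * X 2, X 4 + X 3 + 2 * X 2] : Fin 5 → MvPolynomial (Fin 5) ℚ) (swe 2 4 C4))
      0 2 =
      48576 * X 0 ^ 8 * X 2 ^ 8 *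
        (-(X 1 ^ 2 * X 3 ^ 2 * X 4 ^ 4) + X 1 ^ 4 * X 3 ^ 2 * X 4 ^ 2
          + X 1 ^ 2 * X 3 ^ 4 * X 4 ^ 2 + X 1 ^ 4 * X 3 ^ 4) := by
  obtain ⟨π, hπ⟩ := QR24.code_eq hg hC4
  apply MvPolynomial.map_injective (algebraMap ℚ ℂ) (algebraMap ℚ ℂ).injective
  rw [QR24.map_divPart]
  have h1 : map (algebraMap ℚ ℂ) (((2 : ℚ) ^ 24)⁻¹ • aeval QR24.subst5 (swe 2 4 C4)) =
      ((2 : ℂ) ^ 24)⁻¹ • map (algebraMap ℚ ℂ) (aeval QR24.subst5 (swe 2 4 C4)) := by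
    rw [smul_eq_C_mul, smul_eq_C_mul, map_mul, map_C]
    simp
  change QR24.proj (map (algebraMap ℚ ℂ) (((2 : ℚ) ^ 24)⁻¹ • aeval QR24.subst5 (swe 2 4 C4))) = _
  rw [h1, map_smul, QR24.map_aeval_swe hπ, QR24.proj_value]
  have h2 : (759 * (2 ^ 24 * QR24.octadTerm) : QR24.R) = C ((2 : ℂ) ^ 24) * (759 * QR24.octadTerm) := by
    rw [map_pow, map_ofNat]; ring
  rw [h2, ← smul_eq_C_mul, smul_smul, inv_mul_cancel₀ (by norm_num), one_smul, QR24.octadTerm]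
  simp only [map_mul, map_add, map_neg, map_pow, map_X, map_ofNat]
  ring
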